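/- For every N ≥ 1, β ≥ 0 and h ∈ ℝ, the quenched free energy of the SK model is bounded by the Parisi solution: N⁻¹ E log Z_N(β,h,J) ≤ ᾱ(β,h), where ᾱ(β,h) is the infimum of the trial function ᾱ(β,h;x) over all piecewise constant functional order parameters x. -/

import Mathlib

open MeasureTheory ProbabilityTheory Filter

noncomputable section

/-! ## Gaussian disorder -/

/-- The standard (centered, unit variance) Gaussian measure on `ℝ`. -/
def stdGauss : Measure ℝ := gaussianReal 0 1

instance : IsProbabilityMeasure stdGauss := by unfold stdGauss; infer_instance

/-- `N` i.i.d. standard Gaussian variables. -/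
def gaussN (N : ℕ) : Measure (Fin N → ℝ) := Measure.pi fun _ => stdGauss

instance (N : ℕ) : IsProbabilityMeasure (gaussN N) := by unfold gaussN; infer_instance

/-- The i.i.d. standard Gaussian couplings `J_{ij}` (only entries with `i < j` are used). -/
def gaussC (N : ℕ) : Measure (Fin N → Fin N → ℝ) := Measure.pi fun _ => gaussN N

instance (N : ℕ) : IsProbabilityMeasure (gaussC N) := by unfold gaussC; infer_instance

/-- The i.i.d. standard Gaussian one-body fields `J_i^a`, `a = 1, …, K`
(row `⟨a-1⟩ : Fin K` corresponds to the level `a` of the paper). -/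
def gaussS (K N : ℕ) : Measure (Fin K → Fin N → ℝ) := Measure.pi fun _ => gaussN N

instance (K N : ℕ) : IsProbabilityMeasure (gaussS K N) := by unfold gaussS; infer_instance

/-- I.i.d. standard Gaussian couplings indexed by subsets of sites, for the p-spin model
(only the cardinality-`p` subsets are used). -/
def gaussP (N : ℕ) : Measure (Finset (Fin N) → ℝ) := Measure.pi fun _ => stdGauss

instance (N : ℕ) : IsProbabilityMeasure (gaussP N) := by unfold gaussP; infer_instance

/-! ## Spins and overlaps -/

/-- The spin value (`±1`) of a Boolean configuration entry. -/
def spin (b : Bool) : ℝ := if b then 1 else -1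

/-- The overlap `q₁₂ = N⁻¹ ∑ᵢ σᵢ⁽¹⁾ σᵢ⁽²⁾` of two replicas. -/
def overlap (N : ℕ) (σ τ : Fin N → Bool) : ℝ := (N : ℝ)⁻¹ * ∑ i, spin (σ i) * spin (τ i)

/-! ## Piecewise constant functional order parameters and the Parisi function -/

/-- One backward step of the Parisi recursion on an interval of constancy of the
functional order parameter: from `g = f(q_a, ·)`, with value `m` of the order parameter
and `s = q_a - q`, produce `f(q, ·)`. -/
def pStep (m s : ℝ) (g : ℝ → ℝ) (y : ℝ) : ℝ :=
  if m = 0 then ∫ z, g (y + z * Real.sqrt s) ∂stdGauss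
  else m⁻¹ * Real.log (∫ z, Real.exp (m * g (y + z * Real.sqrt s)) ∂stdGauss)

/-- `parisiLevel K q m β j` is the Parisi function `f(q_{K-j}, ·; x, β)` at the node
`q_{K-j}`, obtained by `j` backward steps from the final condition `f(q_K, y) = log cosh (β y)`. -/
def parisiLevel (K : ℕ) (q m : ℕ → ℝ) (β : ℝ) : ℕ → ℝ → ℝ
  | 0 => fun y => Real.log (Real.cosh (β * y))
  | j + 1 => pStep (m (K - j)) (q (K - j) - q (K - j - 1)) (parisiLevel K q m β j)

/-- The Parisi function `f(r, y; x, β)` for a piecewise constant order parameter `x`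
given by nodes `q` and values `m`:  for `q_{a-1} ≤ r ≤ q_a` it is obtained from
`f(q_a, ·)` by one backward step with value `m_a` over a time `q_a - r`. -/
def parisiF (K : ℕ) (q m : ℕ → ℝ) (β : ℝ) (r y : ℝ) : ℝ :=
  pStep (m (sInf {a : ℕ | r ≤ q a})) (q (sInf {a : ℕ | r ≤ q a}) - r)
    (parisiLevel K q m β (K - sInf {a : ℕ | r ≤ q a})) y

/-- The functional order parameter as a function: `x(r) = m_a` for `q_{a-1} ≤ r < q_a`,
and `x(1) = m_K`. -/
def xFun (K : ℕ) (q m : ℕ → ℝ) (r : ℝ) : ℝ :=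
  if 1 ≤ r then m K else m (sInf {a : ℕ | r < q a})

/-- A piecewise constant functional order parameter:
`0 = q_0 ≤ q_1 ≤ … ≤ q_K = 1`, `0 ≤ m_1 ≤ … ≤ m_K ≤ 1`,
with the conventions `m_0 = 0`, `m_{K+1} = 1`. -/
structure OrderParam where
  K : ℕ
  hK : 1 ≤ K
  q : ℕ → ℝ
  m : ℕ → ℝ
  hq0 : q 0 = 0
  hqK : q K = 1
  hq_mono : ∀ a, a < K → q a ≤ q (a + 1)
  hm0 : m 0 = 0
  hmtop : m (K + 1) = 1
  hm1 : 0 ≤ m 1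
  hm_mono : ∀ a, 1 ≤ a → a < K → m a ≤ m (a + 1)
  hmK : m K ≤ 1

/-- Guerra's trial function `ᾱ(β, h; x) = log 2 + f(0, h; x, β) - (β²/2) ∫₀¹ r x(r) dr`. -/
def trialAlpha (K : ℕ) (q m : ℕ → ℝ) (β h : ℝ) : ℝ :=
  Real.log 2 + parisiLevel K q m β K h - β ^ 2 / 2 * ∫ r in (0 : ℝ)..1, r * xFun K q m r

/-! ## The Sherrington–Kirkpatrick model -/

/-- The SK Hamiltonian `H_N(σ, h, J) = -(1/√N) ∑_{i<j} J_{ij} σ_i σ_j - h ∑_i σ_i`. -/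
def hamSK (N : ℕ) (h : ℝ) (Jc : Fin N → Fin N → ℝ) (σ : Fin N → Bool) : ℝ :=
  -(1 / Real.sqrt N) * ∑ i, ∑ j, (if i < j then Jc i j * spin (σ i) * spin (σ j) else 0)
    - h * ∑ i, spin (σ i)

/-- The SK partition function `Z_N(β, h, J)`. -/
def ZSK (N : ℕ) (β h : ℝ) (Jc : Fin N → Fin N → ℝ) : ℝ :=
  ∑ σ : Fin N → Bool, Real.exp (-(β * hamSK N h Jc σ))

/-- The quenched average `N⁻¹ E log Z_N(β, h, J)`. -/
def quenchedFE (N : ℕ) (β h : ℝ) : ℝ :=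
  (N : ℝ)⁻¹ * ∫ Jc, Real.log (ZSK N β h Jc) ∂gaussC N

/-- The ground state energy density `e_N(J, h)`, defined by
`-e_N(J, h) = N⁻¹ min_σ H_N(σ, h, J)`. -/
def eGS (N : ℕ) (h : ℝ) (Jc : Fin N → Fin N → ℝ) : ℝ :=
  -((N : ℝ)⁻¹ * ⨅ σ : Fin N → Bool, hamSK N h Jc σ)

/-- The quenched ground state energy density `e_N(h) = E(e_N(J, h))`. -/
def eQuenched (N : ℕ) (h : ℝ) : ℝ := ∫ Jc, eGS N h Jc ∂gaussC N

/-! ## The interpolating system -/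

/-- The interpolating Boltzmann factor. -/
def bFac (N K : ℕ) (β h t : ℝ) (q : ℕ → ℝ) (Jc : Fin N → Fin N → ℝ)
    (Js : Fin K → Fin N → ℝ) (σ : Fin N → Bool) : ℝ :=
  Real.exp (β * Real.sqrt (t / N) *
        ∑ i, ∑ j, (if i < j then Jc i j * spin (σ i) * spin (σ j) else 0)
      + β * h * ∑ i, spin (σ i)
      + β * Real.sqrt (1 - t) *
          ∑ a : Fin K, Real.sqrt (q (a.val + 1) - q a.val) * ∑ i, Js a i * spin (σ i))

/-- The interpolating partition function `Z̃_N(β, h; t; x; J)`. -/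
def Ztil (N K : ℕ) (β h t : ℝ) (q : ℕ → ℝ) (Jc : Fin N → Fin N → ℝ)
    (Js : Fin K → Fin N → ℝ) : ℝ :=
  ∑ σ : Fin N → Bool, bFac N K β h t q Jc Js σ

/-- `Wrec … j` is the random variable `Z_{K-j}`:  `Z_K = Z̃_N` and
`Z_{a-1} = (E_a (Z_a^{m_a}))^{1/m_a}`, where `E_a` integrates the Gaussian row `J^a`. -/
def Wrec (N K : ℕ) (β h t : ℝ) (q m : ℕ → ℝ) :
    ℕ → (Fin N → Fin N → ℝ) → (Fin K → Fin N → ℝ) → ℝ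
  | 0 => Ztil N K β h t q
  | j + 1 => fun Jc Js =>
      if hj : j < K then
        (∫ g : Fin N → ℝ,
            (Wrec N K β h t q m j Jc (Function.update Js ⟨K - 1 - j, by omega⟩ g)) ^ m (K - j)
          ∂gaussN N) ^ (m (K - j))⁻¹
      else Wrec N K β h t q m j Jc Js

/-- `Zrec … a` is the random variable `Z_a` of the broken replica interpolation. -/
def Zrec (N K : ℕ) (β h t : ℝ) (q m : ℕ → ℝ) (a : ℕ) :
    (Fin N → Fin N → ℝ) → (Fin K → Fin N → ℝ) → ℝ :=
  Wrec N K β h t q m (K - a)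

/-- The interpolating auxiliary function `α̃_N(t) = N⁻¹ E₀ log Z₀`. -/
def atilde (N K : ℕ) (β h : ℝ) (q m : ℕ → ℝ) (t : ℝ) : ℝ :=
  (N : ℝ)⁻¹ * ∫ Jc, Real.log (Wrec N K β h t q m K Jc 0) ∂gaussC N

/-- The normalized weight `f_a = Z_a^{m_a} / E_a(Z_a^{m_a}) = Z_a^{m_a} / Z_{a-1}^{m_a}`. -/
def fWeight (N K : ℕ) (β h t : ℝ) (q m : ℕ → ℝ) (a : ℕ) (Jc : Fin N → Fin N → ℝ)
    (Js : Fin K → Fin N → ℝ) : ℝ :=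
  Zrec N K β h t q m a Jc Js ^ m a / Zrec N K β h t q m (a - 1) Jc Js ^ m a

/-- The Gibbs expectation `ω(A)` of the interpolating Boltzmann factor. -/
def gibbs (N K : ℕ) (β h t : ℝ) (q : ℕ → ℝ) (A : (Fin N → Bool) → ℝ)
    (Jc : Fin N → Fin N → ℝ) (Js : Fin K → Fin N → ℝ) : ℝ :=
  (∑ σ : Fin N → Bool, A σ * bFac N K β h t q Jc Js σ) / Ztil N K β h t q Jc Js

/-- The two-replica Gibbs product expectation `Ω(A)`. -/
def gibbs2 (N K : ℕ) (β h t : ℝ) (q : ℕ → ℝ) (A : (Fin N → Bool) → (Fin N → Bool) → ℝ)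
    (Jc : Fin N → Fin N → ℝ) (Js : Fin K → Fin N → ℝ) : ℝ :=
  (∑ σ : Fin N → Bool, ∑ τ : Fin N → Bool,
      A σ τ * bFac N K β h t q Jc Js σ * bFac N K β h t q Jc Js τ) /
    Ztil N K β h t q Jc Js ^ 2

/-- `omT1 … A j` is the partially averaged state `ω̃_{K-j}(A)`:
`ω̃_K = ω` and `ω̃_{a-1}(·) = E_a (f_a ω̃_a(·))`. -/
def omT1 (N K : ℕ) (β h t : ℝ) (q m : ℕ → ℝ) (A : (Fin N → Bool) → ℝ) :
    ℕ → (Fin N → Fin N → ℝ) → (Fin K → Fin N → ℝ) → ℝ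
  | 0 => gibbs N K β h t q A
  | j + 1 => fun Jc Js =>
      if hj : j < K then
        ∫ g : Fin N → ℝ,
          fWeight N K β h t q m (K - j) Jc (Function.update Js ⟨K - 1 - j, by omega⟩ g) *
            omT1 N K β h t q m A j Jc (Function.update Js ⟨K - 1 - j, by omega⟩ g)
          ∂gaussN N
      else omT1 N K β h t q m A j Jc Js

/-- `omT2 … A j` is the partially averaged two-replica state `Ω̃_{K-j}(A)`:
`Ω̃_K = Ω` and `Ω̃_{a-1}(·) = E_a (f_a Ω̃_a(·))`. -/
def omT2 (N K : ℕ) (β h t : ℝ) (q m : ℕ → ℝ) (A : (Fin N → Bool) → (Fin N → Bool) → ℝ) :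
    ℕ → (Fin N → Fin N → ℝ) → (Fin K → Fin N → ℝ) → ℝ
  | 0 => gibbs2 N K β h t q A
  | j + 1 => fun Jc Js =>
      if hj : j < K then
        ∫ g : Fin N → ℝ,
          fWeight N K β h t q m (K - j) Jc (Function.update Js ⟨K - 1 - j, by omega⟩ g) *
            omT2 N K β h t q m A j Jc (Function.update Js ⟨K - 1 - j, by omega⟩ g)
          ∂gaussN N
      else omT2 N K β h t q m A j Jc Js

/-- The deformed quenched average `⟨A⟩_a = E(f_1 ⋯ f_a Ω̃_a(A))` at interpolation
parameter `t`, for a function `A` of two replicas. -/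
def angA (N K : ℕ) (β h t : ℝ) (q m : ℕ → ℝ) (a : ℕ)
    (A : (Fin N → Bool) → (Fin N → Bool) → ℝ) : ℝ :=
  ∫ Jc, ∫ Js,
      (∏ b ∈ Finset.Icc 1 a, fWeight N K β h t q m b Jc Js) *
        omT2 N K β h t q m A (K - a) Jc Js
    ∂gaussS K N ∂gaussC N

/-! ## Zero temperature (ground state) objects -/

/-- The zero-temperature Parisi recursion: `parisiLevelBar K q m j` is `f̄(q_{K-j}, ·; x̄)`,
with final condition `f̄(q_K, y) = |y|`. -/
def parisiLevelBar (K : ℕ) (q m : ℕ → ℝ) : ℕ → ℝ → ℝ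
  | 0 => fun y => |y|
  | j + 1 => pStep (m (K - j)) (q (K - j) - q (K - j - 1)) (parisiLevelBar K q m j)

/-- A zero-temperature piecewise constant order parameter: nodes
`0 = q_0 ≤ … ≤ q_K = 1` and nondecreasing values `0 ≤ m̄_1 ≤ … ≤ m̄_K`
(no upper bound `1`), with the convention `m̄_0 = 0`. -/
structure ZeroTParam where
  K : ℕ
  hK : 1 ≤ K
  q : ℕ → ℝ
  m : ℕ → ℝ
  hq0 : q 0 = 0
  hqK : q K = 1
  hq_mono : ∀ a, a < K → q a ≤ q (a + 1)
  hm0 : m 0 = 0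
  hm1 : 0 ≤ m 1
  hm_mono : ∀ a, 1 ≤ a → a < K → m a ≤ m (a + 1)

/-- The zero-temperature trial function `α̃(h; x̄) = f̄(0, h; x̄) - (1/2) ∫₀¹ r x̄(r) dr`. -/
def gsTrial (K : ℕ) (q m : ℕ → ℝ) (h : ℝ) : ℝ :=
  parisiLevelBar K q m K h - 1 / 2 * ∫ r in (0 : ℝ)..1, r * xFun K q m r

/-! ## The p-spin model -/

/-- A piecewise constant functional order parameter on `[0, p/2]`:
`0 = q_0 ≤ … ≤ q_K = p/2` and `0 ≤ m_1 ≤ … ≤ m_K ≤ 1`. -/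
structure POrderParam (p : ℕ) where
  K : ℕ
  hK : 1 ≤ K
  q : ℕ → ℝ
  m : ℕ → ℝ
  hq0 : q 0 = 0
  hqK : q K = p / 2
  hq_mono : ∀ a, a < K → q a ≤ q (a + 1)
  hm1 : 0 ≤ m 1
  hm_mono : ∀ a, 1 ≤ a → a < K → m a ≤ m (a + 1)
  hmK : m K ≤ 1

/-- The p-spin Hamiltonian
`H_N(σ,h,J) = -(p!/(2N^{p-1}))^{1/2} ∑_{i_1<…<i_p} J_{i_1…i_p} σ_{i_1}⋯σ_{i_p} - h ∑_i σ_i`. -/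
def hamP (p N : ℕ) (h : ℝ) (J : Finset (Fin N) → ℝ) (σ : Fin N → Bool) : ℝ :=
  -Real.sqrt ((Nat.factorial p : ℝ) / (2 * (N : ℝ) ^ (p - 1))) *
      ∑ S ∈ Finset.powersetCard p (Finset.univ : Finset (Fin N)), J S * ∏ i ∈ S, spin (σ i)
    - h * ∑ i, spin (σ i)

/-- The p-spin partition function. -/
def ZP (p N : ℕ) (β h : ℝ) (J : Finset (Fin N) → ℝ) : ℝ :=
  ∑ σ : Fin N → Bool, Real.exp (-(β * hamP p N h J σ))

/-- The p-spin quenched average `N⁻¹ E log Z_N^{(p)}(β, h, J)`. -/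
def quenchedFEP (p N : ℕ) (β h : ℝ) : ℝ :=
  (N : ℝ)⁻¹ * ∫ J, Real.log (ZP p N β h J) ∂gaussP N

/-- The functional order parameter on `[0, p/2]` as a function. -/
def xFunP (p K : ℕ) (q m : ℕ → ℝ) (r : ℝ) : ℝ :=
  if (p : ℝ) / 2 ≤ r then m K else m (sInf {a : ℕ | r < q a})

/-- The change of variables `q̄(r)` defined by `2r = p q̄^{p-1}`. -/
def qBar (p : ℕ) (r : ℝ) : ℝ := (2 * r / p) ^ (((p : ℝ) - 1)⁻¹)

/-- The p-spin trial function
`ᾱ_p(β, h; x) = log 2 + f(0, h; x, β) - (β²/2) ∫₀^{p/2} q̄(r) x(r) dr`. -/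
def trialAlphaP (p K : ℕ) (q m : ℕ → ℝ) (β h : ℝ) : ℝ :=
  Real.log 2 + parisiLevel K q m β K h
    - β ^ 2 / 2 * ∫ r in (0 : ℝ)..((p : ℝ) / 2), qBar p r * xFunP p K q m r


section
/-! ## One-dimensional Gaussian analysis -/

/-- Continuous functions of at most exponential growth. -/
def ExpBd (F : ℝ → ℝ) : Prop := Continuous F ∧ ∃ A B : ℝ, ∀ z, |F z| ≤ A * Real.exp (B * |z|)

lemma integrable_expAbs (A B : ℝ) : Integrable (fun z => A * Real.exp (B * |z|)) stdGauss := by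
  apply Integrable.const_mul
  have h1 : Integrable (fun z : ℝ => Real.exp (B * z)) stdGauss := integrable_exp_mul_gaussianReal B
  have h2 : Integrable (fun z : ℝ => Real.exp (-B * z)) stdGauss :=
    integrable_exp_mul_gaussianReal (-B)
  refine (h1.add h2).mono' (by fun_prop) (ae_of_all _ fun z => ?_)
  rw [Real.norm_eq_abs, Real.abs_exp]
  simp only [Pi.add_apply]
  rcases abs_cases z with ⟨h, _⟩ | ⟨h, _⟩
  · rw [h]; linarith [Real.exp_pos (-B * z)]
  · rw [h]
    have : B * -z = -B * z := by ring
    rw [this]; linarith [Real.exp_pos (B * z)]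

lemma ExpBd.integrable {F : ℝ → ℝ} (h : ExpBd F) : Integrable F stdGauss := by
  obtain ⟨hc, A, B, hb⟩ := h
  exact (integrable_expAbs A B).mono' hc.aestronglyMeasurable (ae_of_all _ fun z => hb z)

lemma abs_le_exp_abs (z : ℝ) : |z| ≤ Real.exp |z| := by
  linarith [Real.add_one_le_exp |z|]

lemma ExpBd.id_mul {F : ℝ → ℝ} (h : ExpBd F) : ExpBd (fun z => z * F z) := by
  obtain ⟨hc, A, B, hb⟩ := h
  refine ⟨by fun_prop, A, B + 1, fun z => ?_⟩
  rw [abs_mul]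
  calc |z| * |F z| ≤ Real.exp |z| * (A * Real.exp (B * |z|)) :=
        mul_le_mul (abs_le_exp_abs z) (hb z) (abs_nonneg _) (Real.exp_pos _).le
    _ = A * Real.exp ((B + 1) * |z|) := by
        rw [add_mul, Real.exp_add, one_mul]; ring

/-- Gaussian integration by parts. -/
lemma gauss_ibp {F F' : ℝ → ℝ} (hd : ∀ z, HasDerivAt F (F' z) z) (hF : ExpBd F) (hF' : ExpBd F') :
    ∫ z, z * F z ∂stdGauss = ∫ z, F' z ∂stdGauss := by
  have key : ∀ G : ℝ → ℝ, Integrable G stdGauss →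
      Integrable (fun z => gaussianPDFReal 0 1 z * G z) := by
    intro G hG
    unfold stdGauss at hG
    rw [gaussianReal_of_var_ne_zero _ one_ne_zero] at hG
    rw [integrable_withDensity_iff_integrable_smul' (measurable_gaussianPDF 0 1)
      (ae_of_all _ fun _ => gaussianPDF_lt_top)] at hG
    simpa [toReal_gaussianPDF] using hG
  have i1 := key _ hF.integrable
  have i2 := key _ hF'.integrable
  have i3 := key _ hF.id_mul.integrable
  have hpdf : ∀ z, HasDerivAt (gaussianPDFReal 0 1) (-z * gaussianPDFReal 0 1 z) z := by
    intro z
    unfold gaussianPDFReal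
    have h1 : HasDerivAt (fun x : ℝ => -(x - 0) ^ 2 / (2 * ((1 : NNReal) : ℝ))) (-z) z := by
      have := (((hasDerivAt_id z).sub_const 0).pow 2).neg.div_const (2 * ((1 : NNReal) : ℝ))
      exact this.congr_deriv (by simp; ring)
    exact ((h1.exp).const_mul ((√(2 * Real.pi * ((1 : NNReal) : ℝ)))⁻¹)).congr_deriv (by ring)
  have h0 := integral_eq_zero_of_hasDerivAt_of_integrable
    (f := fun z => gaussianPDFReal 0 1 z * F z)
    (f' := fun z => gaussianPDFReal 0 1 z * F' z - gaussianPDFReal 0 1 z * (z * F z))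
    (fun z => ((hpdf z).mul (hd z)).congr_deriv (by ring)) (i2.sub i3) i1
  rw [integral_sub i2 i3] at h0
  unfold stdGauss
  rw [integral_gaussianReal_eq_integral_smul one_ne_zero,
    integral_gaussianReal_eq_integral_smul one_ne_zero]
  simp only [smul_eq_mul]
  linarith

/-- Differentiation under the Gaussian integral. -/
lemma gauss_deriv {F F' : ℝ → ℝ → ℝ} (s₀ : ℝ) (hd : ∀ s z, HasDerivAt (fun s => F s z) (F' s z) s)
    (hF : ∀ s, ExpBd (F s)) (hF' : Continuous (F' s₀))
    (hb : ∃ A B, ∀ s ∈ Metric.ball s₀ 1, ∀ z, |F' s z| ≤ A * Real.exp (B * |z|)) :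
    HasDerivAt (fun s => ∫ z, F s z ∂stdGauss) (∫ z, F' s₀ z ∂stdGauss) s₀ := by
  obtain ⟨A, B, hb⟩ := hb
  exact (hasDerivAt_integral_of_dominated_loc_of_deriv_le (Metric.ball_mem_nhds s₀ one_pos)
    (Eventually.of_forall fun s => (hF s).1.aestronglyMeasurable) (hF s₀).integrable
    hF'.aestronglyMeasurable (ae_of_all _ fun z s hs => hb s hs z) (integrable_expAbs A B)
    (ae_of_all _ fun z s _ => hd s z)).2

/-- Continuity under the Gaussian integral. -/
lemma gauss_cont {E : Type*} [NormedAddCommGroup E] {F : E → ℝ → ℝ}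
    (hc : Continuous (fun p : E × ℝ => F p.1 p.2))
    (hb : ∀ x₀, ∃ A B, ∀ x ∈ Metric.ball x₀ 1, ∀ z, |F x z| ≤ A * Real.exp (B * |z|)) :
    Continuous (fun x => ∫ z, F x z ∂stdGauss) := by
  rw [continuous_iff_continuousAt]
  intro x₀
  obtain ⟨A, B, hb⟩ := hb x₀
  refine continuousAt_of_dominated (bound := fun z => A * Real.exp (B * |z|))
    (Eventually.of_forall fun x => ?_) ?_ (integrable_expAbs A B)
    (ae_of_all _ fun z => ?_)
  · exact (hc.comp (by fun_prop : Continuous fun z : ℝ => (x, z))).aestronglyMeasurable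
  · filter_upwards [Metric.ball_mem_nhds x₀ one_pos] with x hx
    exact ae_of_all _ fun z => hb x hx z
  · exact (hc.comp (by fun_prop : Continuous fun x : E => (x, z))).continuousAt

lemma gauss_pos {F : ℝ → ℝ} (hF : ExpBd F) (hp : ∀ z, 0 < F z) : 0 < ∫ z, F z ∂stdGauss := by
  rw [integral_pos_iff_support_of_nonneg (fun z => (hp z).le) hF.integrable]
  have : Function.support F = Set.univ := by
    ext z; simp [(hp z).ne']
  rw [this]; simp
end


section
/-! ## Gaussian averages along a line, at fixed interpolation time -/

/-- Continuous bounded functions. -/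
def CB {E : Type*} [TopologicalSpace E] (f : E → ℝ) : Prop := Continuous f ∧ ∃ C, ∀ x, |f x| ≤ C

section CB
variable {E : Type*} [TopologicalSpace E] {f g : E → ℝ}

lemma CB.const (a : ℝ) : CB (fun _ : E => a) := ⟨continuous_const, |a|, fun _ => le_rfl⟩

lemma CB.add (hf : CB f) (hg : CB g) : CB (fun x => f x + g x) := by
  obtain ⟨c1, A, hA⟩ := hf
  obtain ⟨c2, B, hB⟩ := hg
  exact ⟨c1.add c2, A + B, fun x => (abs_add_le _ _).trans (add_le_add (hA x) (hB x))⟩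

lemma CB.mul (hf : CB f) (hg : CB g) : CB (fun x => f x * g x) := by
  obtain ⟨c1, A, hA⟩ := hf
  obtain ⟨c2, B, hB⟩ := hg
  refine ⟨c1.mul c2, A * B, fun x => ?_⟩
  rw [abs_mul]
  exact mul_le_mul (hA x) (hB x) (abs_nonneg _) ((abs_nonneg _).trans (hA x))

lemma CB.const_mul (a : ℝ) (hf : CB f) : CB (fun x => a * f x) := (CB.const a).mul hf

lemma CB.sum {ι : Type*} (s : Finset ι) {F : ι → E → ℝ} (h : ∀ i, CB (F i)) :
    CB (fun x => ∑ i ∈ s, F i x) := by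
  classical
  induction s using Finset.induction_on with
  | empty => simpa using CB.const 0
  | insert a s ha ih => simpa [Finset.sum_insert ha] using (h a).add ih
end CB

variable {S : Type*} [Fintype S]

/-- Admissible functions: continuous with linear growth. -/
def Adm (g : (S → ℝ) → ℝ) : Prop := Continuous g ∧ ∃ C, ∀ x, |g x| ≤ C + ‖x‖

/-- The unnormalized weighted Gaussian average along a line. -/
def Nm (m a : ℝ) (v : S → ℝ) (g f : (S → ℝ) → ℝ) (x : S → ℝ) : ℝ :=
  ∫ z, Real.exp (m * g (x + (z * a) • v)) * f (x + (z * a) • v) ∂stdGauss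

/-- The normalized weighted Gaussian average along a line. -/
def Av (m a : ℝ) (v : S → ℝ) (g f : (S → ℝ) → ℝ) (x : S → ℝ) : ℝ :=
  Nm m a v g f x / Nm m a v g (fun _ => 1) x

/-- One elementary Parisi step in the direction `v`. -/
def Tst (m a : ℝ) (v : S → ℝ) (g : (S → ℝ) → ℝ) (x : S → ℝ) : ℝ :=
  if m = 0 then ∫ z, g (x + (z * a) • v) ∂stdGauss
  else m⁻¹ * Real.log (∫ z, Real.exp (m * g (x + (z * a) • v)) ∂stdGauss)

lemma norm_pt_le (a : ℝ) (v x : S → ℝ) (z : ℝ) :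
    ‖x + (z * a) • v‖ ≤ ‖x‖ + (|a| * ‖v‖) * |z| := by
  refine (norm_add_le _ _).trans ?_
  rw [norm_smul, Real.norm_eq_abs, abs_mul]
  exact le_of_eq (by ring)

lemma wt_le {m a C : ℝ} {v : S → ℝ} {g : (S → ℝ) → ℝ} (hm : 0 ≤ m) (hg : ∀ x, |g x| ≤ C + ‖x‖)
    {R : ℝ} {x : S → ℝ} (hx : ‖x‖ ≤ R) (z : ℝ) :
    Real.exp (m * g (x + (z * a) • v)) ≤
      Real.exp (m * (C + R)) * Real.exp (m * (|a| * ‖v‖) * |z|) := by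
  rw [← Real.exp_add]
  apply Real.exp_le_exp.2
  have h1 := (le_abs_self _).trans (hg (x + (z * a) • v))
  have h2 := norm_pt_le a v x z
  calc m * g (x + (z * a) • v) ≤ m * (C + (R + (|a| * ‖v‖) * |z|)) :=
        mul_le_mul_of_nonneg_left (by linarith) hm
    _ = _ := by ring

lemma wtf_le {m a C Cf : ℝ} {v : S → ℝ} {g f : (S → ℝ) → ℝ} (hm : 0 ≤ m)
    (hg : ∀ x, |g x| ≤ C + ‖x‖) (hf : ∀ x, |f x| ≤ Cf)
    {R : ℝ} {x : S → ℝ} (hx : ‖x‖ ≤ R) (z : ℝ) :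
    |Real.exp (m * g (x + (z * a) • v)) * f (x + (z * a) • v)| ≤
      (Real.exp (m * (C + R)) * Cf) * Real.exp (m * (|a| * ‖v‖) * |z|) := by
  rw [abs_mul, Real.abs_exp]
  calc _ ≤ (Real.exp (m * (C + R)) * Real.exp (m * (|a| * ‖v‖) * |z|)) * Cf :=
        mul_le_mul (wt_le hm hg hx z) (hf _) (abs_nonneg _) (by positivity)
    _ = _ := by ring

lemma norm_le_of_ball {x x₀ : S → ℝ} (h : x ∈ Metric.ball x₀ 1) : ‖x‖ ≤ ‖x₀‖ + 1 := by
  have h1 : ‖x - x₀‖ < 1 := by simpa [dist_eq_norm] using h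
  have h2 := norm_le_norm_add_norm_sub' x x₀
  linarith

lemma cont_pt (a : ℝ) (v : S → ℝ) :
    Continuous (fun p : (S → ℝ) × ℝ => p.1 + (p.2 * a) • v) := by fun_prop

section fixed
variable {m a : ℝ} {v : S → ℝ} {g : (S → ℝ) → ℝ}

lemma expBd_wt (hm : 0 ≤ m) (hg : Adm g) {f : (S → ℝ) → ℝ} (hf : CB f) (x : S → ℝ) :
    ExpBd (fun z => Real.exp (m * g (x + (z * a) • v)) * f (x + (z * a) • v)) := by
  obtain ⟨hgc, C, hC⟩ := hg
  obtain ⟨hfc, Cf, hCf⟩ := hf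
  have hp : Continuous (fun z : ℝ => x + (z * a) • v) := by fun_prop
  exact ⟨(Real.continuous_exp.comp (continuous_const.mul (hgc.comp hp))).mul (hfc.comp hp),
    _, _, fun z => wtf_le hm hC hCf le_rfl z⟩

lemma expBd_g (hg : Adm g) (x : S → ℝ) : ExpBd (fun z => g (x + (z * a) • v)) := by
  obtain ⟨hgc, C, hC⟩ := hg
  have hp : Continuous (fun z : ℝ => x + (z * a) • v) := by fun_prop
  refine ⟨hgc.comp hp, Real.exp (C + ‖x‖), |a| * ‖v‖, fun z => ?_⟩
  have h1 := (hC (x + (z * a) • v)).trans (add_le_add_right (norm_pt_le a v x z) C)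
  refine h1.trans ?_
  rw [← Real.exp_add]
  linarith [Real.add_one_le_exp (C + ‖x‖ + |a| * ‖v‖ * |z|)]

lemma cont_Nm (hm : 0 ≤ m) (hg : Adm g) {f : (S → ℝ) → ℝ} (hf : CB f) :
    Continuous (Nm m a v g f) := by
  obtain ⟨hgc, C, hC⟩ := hg
  obtain ⟨hfc, Cf, hCf⟩ := hf
  exact gauss_cont ((Real.continuous_exp.comp (continuous_const.mul (hgc.comp (cont_pt a v)))).mul
    (hfc.comp (cont_pt a v))) fun x₀ => ⟨_, _, fun x hx z =>
      wtf_le hm hC hCf (norm_le_of_ball hx) z⟩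

lemma Nm_one_pos (hm : 0 ≤ m) (hg : Adm g) (x : S → ℝ) : 0 < Nm m a v g (fun _ => 1) x :=
  gauss_pos (expBd_wt hm hg (CB.const 1) x) fun z => by positivity

lemma Nm_add (hm : 0 ≤ m) (hg : Adm g) {f₁ f₂ : (S → ℝ) → ℝ} (h₁ : CB f₁) (h₂ : CB f₂)
    (x : S → ℝ) : Nm m a v g (fun x => f₁ x + f₂ x) x = Nm m a v g f₁ x + Nm m a v g f₂ x := by
  unfold Nm
  rw [← integral_add (expBd_wt hm hg h₁ x).integrable (expBd_wt hm hg h₂ x).integrable]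
  simp only [mul_add]

lemma Nm_const_mul (k : ℝ) (f : (S → ℝ) → ℝ)
    (x : S → ℝ) : Nm m a v g (fun x => k * f x) x = k * Nm m a v g f x := by
  unfold Nm
  rw [← integral_const_mul]
  congr 1; ext z; ring

lemma Nm_sum (hm : 0 ≤ m) (hg : Adm g) {ι : Type*} (s : Finset ι) {F : ι → (S → ℝ) → ℝ}
    (h : ∀ i, CB (F i)) (x : S → ℝ) :
    Nm m a v g (fun x => ∑ i ∈ s, F i x) x = ∑ i ∈ s, Nm m a v g (F i) x := by
  unfold Nm
  rw [← integral_finsetSum _ fun i _ => (expBd_wt hm hg (h i) x).integrable]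
  simp only [Finset.mul_sum]

lemma Nm_mono (hm : 0 ≤ m) (hg : Adm g) {f₁ f₂ : (S → ℝ) → ℝ} (h₁ : CB f₁) (h₂ : CB f₂)
    (h : ∀ x, f₁ x ≤ f₂ x) (x : S → ℝ) : Nm m a v g f₁ x ≤ Nm m a v g f₂ x :=
  integral_mono (expBd_wt hm hg h₁ x).integrable (expBd_wt hm hg h₂ x).integrable
    fun z => mul_le_mul_of_nonneg_left (h _) (Real.exp_pos _).le

lemma Av_add (hm : 0 ≤ m) (hg : Adm g) {f₁ f₂ : (S → ℝ) → ℝ} (h₁ : CB f₁) (h₂ : CB f₂)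
    (x : S → ℝ) : Av m a v g (fun x => f₁ x + f₂ x) x = Av m a v g f₁ x + Av m a v g f₂ x := by
  unfold Av; rw [Nm_add hm hg h₁ h₂, add_div]

lemma Av_const_mul (k : ℝ) (f : (S → ℝ) → ℝ)
    (x : S → ℝ) : Av m a v g (fun x => k * f x) x = k * Av m a v g f x := by
  unfold Av; rw [Nm_const_mul, mul_div_assoc]

lemma Av_sum (hm : 0 ≤ m) (hg : Adm g) {ι : Type*} (s : Finset ι) {F : ι → (S → ℝ) → ℝ}
    (h : ∀ i, CB (F i)) (x : S → ℝ) :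
    Av m a v g (fun x => ∑ i ∈ s, F i x) x = ∑ i ∈ s, Av m a v g (F i) x := by
  unfold Av; rw [Nm_sum hm hg s h, Finset.sum_div]

lemma Av_one (hm : 0 ≤ m) (hg : Adm g) (x : S → ℝ) : Av m a v g (fun _ => 1) x = 1 :=
  div_self (Nm_one_pos hm hg x).ne'

lemma Av_const (hm : 0 ≤ m) (hg : Adm g) (k : ℝ) (x : S → ℝ) : Av m a v g (fun _ => k) x = k := by
  have := Av_const_mul (m := m) (a := a) (v := v) (g := g) k (fun _ => 1) x
  rw [Av_one hm hg] at this
  simpa using this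

lemma Av_mono (hm : 0 ≤ m) (hg : Adm g) {f₁ f₂ : (S → ℝ) → ℝ} (h₁ : CB f₁) (h₂ : CB f₂)
    (h : ∀ x, f₁ x ≤ f₂ x) (x : S → ℝ) : Av m a v g f₁ x ≤ Av m a v g f₂ x :=
  div_le_div_of_nonneg_right (Nm_mono hm hg h₁ h₂ h x) (Nm_one_pos hm hg x).le

lemma Av_abs_le (hm : 0 ≤ m) (hg : Adm g) {f : (S → ℝ) → ℝ} (hf : CB f) {C : ℝ}
    (hC : ∀ x, |f x| ≤ C) (x : S → ℝ) : |Av m a v g f x| ≤ C := by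
  rw [abs_le]
  constructor
  · rw [← Av_const (a := a) (v := v) hm hg (-C) x]
    exact Av_mono hm hg (CB.const _) hf (fun x => (abs_le.1 (hC x)).1) x
  · rw [← Av_const (a := a) (v := v) hm hg C x]
    exact Av_mono hm hg hf (CB.const _) (fun x => (abs_le.1 (hC x)).2) x

lemma cont_Av (hm : 0 ≤ m) (hg : Adm g) {f : (S → ℝ) → ℝ} (hf : CB f) :
    Continuous (Av m a v g f) :=
  (cont_Nm hm hg hf).div (cont_Nm hm hg (CB.const 1)) fun x => (Nm_one_pos hm hg x).ne'

lemma Nm_line (hm : 0 ≤ m) (hg : Adm g) {f f' g' : (S → ℝ) → ℝ} (hf : CB f) (hf' : CB f')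
    (hg' : CB g') (y : S → ℝ)
    (df : ∀ x s, HasDerivAt (fun s : ℝ => f (x + s • y)) (f' (x + s • y)) s)
    (dg : ∀ x s, HasDerivAt (fun s : ℝ => g (x + s • y)) (g' (x + s • y)) s) (x : S → ℝ) (s : ℝ) :
    HasDerivAt (fun s : ℝ => Nm m a v g f (x + s • y))
      (Nm m a v g (fun x => f' x + m * (g' x * f x)) (x + s • y)) s := by
  have hcb : CB (fun x => f' x + m * (g' x * f x)) := hf'.add (CB.const_mul m (hg'.mul hf))
  have e : ∀ (s z : ℝ), x + s • y + (z * a) • v = (x + (z * a) • v) + s • y := fun s z => by abel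
  unfold Nm
  refine gauss_deriv s (F := fun s z => Real.exp (m * g (x + s • y + (z * a) • v)) *
      f (x + s • y + (z * a) • v)) (F' := fun s z => Real.exp (m * g (x + s • y + (z * a) • v)) *
        (fun x => f' x + m * (g' x * f x)) (x + s • y + (z * a) • v)) ?_ ?_ ?_ ?_
  · intro s z
    simp only [e]
    exact ((((dg (x + (z * a) • v) s).const_mul m).exp).mul (df (x + (z * a) • v) s)).congr_deriv
      (by ring)
  · intro s; exact expBd_wt hm hg hf _
  · exact (expBd_wt hm hg hcb _).1
  · obtain ⟨hgc, C, hC⟩ := hg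
    obtain ⟨_, Cf, hCf⟩ := hcb
    refine ⟨_, _, fun r hr z => wtf_le (R := ‖x‖ + (|s| + 1) * ‖y‖) hm hC hCf ?_ z⟩
    refine (norm_add_le _ _).trans ?_
    rw [norm_smul, Real.norm_eq_abs]
    have : |r| ≤ |s| + 1 := by
      have h1 : |r - s| < 1 := by simpa [Real.dist_eq] using hr
      have h2 := abs_sub_abs_le_abs_sub r s
      linarith
    gcongr

/-- Gaussian integration by parts for the weighted average. -/
lemma Nm_ibp (hm : 0 ≤ m) (hg : Adm g) {f f' g' : (S → ℝ) → ℝ} (hf : CB f) (hf' : CB f')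
    (hg' : CB g')
    (df : ∀ x s, HasDerivAt (fun s : ℝ => f (x + s • v)) (f' (x + s • v)) s)
    (dg : ∀ x s, HasDerivAt (fun s : ℝ => g (x + s • v)) (g' (x + s • v)) s) (x : S → ℝ) :
    ∫ z, z * (Real.exp (m * g (x + (z * a) • v)) * f (x + (z * a) • v)) ∂stdGauss =
      a * Nm m a v g (fun x => f' x + m * (g' x * f x)) x := by
  have hcb : CB (fun x => f' x + m * (g' x * f x)) := hf'.add (CB.const_mul m (hg'.mul hf))
  rw [← Nm_const_mul]
  unfold Nm
  refine gauss_ibp (fun z => ?_) (expBd_wt hm hg hf x) (expBd_wt hm hg (CB.const_mul a hcb) x)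
  have hz : HasDerivAt (fun z : ℝ => z * a) a z := by simpa using (hasDerivAt_id z).mul_const a
  have h1 := HasDerivAt.comp z (dg x (z * a)) hz
  have h2 := HasDerivAt.comp z (df x (z * a)) hz
  exact (((h1.const_mul m).exp).mul h2).congr_deriv (by simp only [Function.comp]; ring)

lemma Tst_growth (hm : 0 ≤ m) (ha : |a| ≤ 1) {C : ℝ} (hgc : Continuous g)
    (hC : ∀ x, |g x| ≤ C + ‖x‖) (x : S → ℝ) :
    |Tst m a v g x| ≤ C + (∫ z, ‖v‖ * |z| ∂stdGauss +
      (|m⁻¹ * Real.log (∫ z, Real.exp (m * ‖v‖ * |z|) ∂stdGauss)| +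
       |m⁻¹ * Real.log (∫ z, Real.exp (-(m * ‖v‖) * |z|) ∂stdGauss)|)) + ‖x‖ := by
  have hg : Adm g := ⟨hgc, C, hC⟩
  have hpt : ∀ z, |g (x + (z * a) • v)| ≤ C + ‖x‖ + ‖v‖ * |z| := fun z => by
    have h1 := hC (x + (z * a) • v)
    have h2 := norm_pt_le a v x z
    have h3 : |a| * ‖v‖ * |z| ≤ ‖v‖ * |z| := by
      have := mul_le_mul_of_nonneg_right ha (mul_nonneg (norm_nonneg v) (abs_nonneg z))
      linarith
    linarith
  have i0 : Integrable (fun z : ℝ => ‖v‖ * |z|) stdGauss := by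
    refine Integrable.const_mul ?_ _
    have := (integrable_expAbs 1 1)
    refine this.mono' (by fun_prop) (ae_of_all _ fun z => ?_)
    simpa using abs_le_exp_abs z
  have hp0 : 0 ≤ ∫ z, ‖v‖ * |z| ∂stdGauss := integral_nonneg fun z => by positivity
  unfold Tst
  split_ifs with h0
  · have : |∫ z, g (x + (z * a) • v) ∂stdGauss| ≤ ∫ z, (C + ‖x‖ + ‖v‖ * |z|) ∂stdGauss := by
      refine (abs_integral_le_integral_abs).trans ?_
      exact integral_mono (expBd_g hg x).integrable.abs ((integrable_const _).add i0) hpt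
    rw [integral_add (integrable_const _) i0] at this
    simp only [integral_const, probReal_univ, smul_eq_mul, one_mul] at this
    have h1 := abs_nonneg (m⁻¹ * Real.log (∫ z, Real.exp (m * ‖v‖ * |z|) ∂stdGauss))
    have h2 := abs_nonneg (m⁻¹ * Real.log (∫ z, Real.exp (-(m * ‖v‖) * |z|) ∂stdGauss))
    linarith
  · have hm' : 0 < m := lt_of_le_of_ne hm (Ne.symm h0)
    have hi : Integrable (fun z => Real.exp (m * g (x + (z * a) • v))) stdGauss := by
      simpa using (expBd_wt (a := a) (v := v) hm hg (CB.const 1) x).integrable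
    have hpos : 0 < ∫ z, Real.exp (m * g (x + (z * a) • v)) ∂stdGauss := by
      simpa [Nm] using (Nm_one_pos (a := a) (v := v) hm hg x)
    have j1 : ∀ B : ℝ, Integrable (fun z => Real.exp (B * |z|)) stdGauss := fun B => by
      simpa using integrable_expAbs 1 B
    have q1 : ∀ B : ℝ, 0 < ∫ z, Real.exp (B * |z|) ∂stdGauss := fun B =>
      gauss_pos ⟨by fun_prop, 1, B, fun z => by simp⟩ fun z => Real.exp_pos _
    have up : ∫ z, Real.exp (m * g (x + (z * a) • v)) ∂stdGauss ≤
        Real.exp (m * (C + ‖x‖)) * ∫ z, Real.exp (m * ‖v‖ * |z|) ∂stdGauss := by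
      rw [← integral_const_mul]
      refine integral_mono hi ((j1 _).const_mul _) fun z => ?_
      simp only
      rw [← Real.exp_add]
      apply Real.exp_le_exp.2
      have := mul_le_mul_of_nonneg_left ((le_abs_self _).trans (hpt z)) hm
      linarith
    have lo : Real.exp (-(m * (C + ‖x‖))) * ∫ z, Real.exp (-(m * ‖v‖) * |z|) ∂stdGauss ≤
        ∫ z, Real.exp (m * g (x + (z * a) • v)) ∂stdGauss := by
      rw [← integral_const_mul]
      refine integral_mono ((j1 _).const_mul _) hi fun z => ?_
      simp only
      rw [← Real.exp_add]
      apply Real.exp_le_exp.2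
      have := mul_le_mul_of_nonneg_left ((neg_le_abs _).trans (hpt z)) hm
      linarith
    have up' := Real.log_le_log hpos up
    have lo' := Real.log_le_log (mul_pos (Real.exp_pos _) (q1 _)) lo
    rw [Real.log_mul (Real.exp_pos _).ne' (q1 _).ne', Real.log_exp] at up' lo'
    have up2 := mul_le_mul_of_nonneg_left up' (inv_nonneg.2 hm)
    have lo2 := mul_le_mul_of_nonneg_left lo' (inv_nonneg.2 hm)
    have e1 : m⁻¹ * (m * (C + ‖x‖)) = C + ‖x‖ := by field_simp
    rw [mul_add] at up2 lo2
    rw [mul_neg] at lo2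
    rw [e1] at up2 lo2
    have h1 := abs_le.1 (le_refl |m⁻¹ * Real.log (∫ z, Real.exp (m * ‖v‖ * |z|) ∂stdGauss)|)
    have h2 := abs_le.1 (le_refl |m⁻¹ * Real.log (∫ z, Real.exp (-(m * ‖v‖) * |z|) ∂stdGauss)|)
    rw [abs_le]
    constructor <;> linarith

lemma cont_Tst (hm : 0 ≤ m) (hg : Adm g) : Continuous (Tst m a v g) := by
  unfold Tst
  split_ifs with h0
  · obtain ⟨hgc, C, hC⟩ := hg
    refine gauss_cont (hgc.comp (cont_pt a v)) fun x₀ =>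
      ⟨Real.exp (C + (‖x₀‖ + 1)), |a| * ‖v‖, fun x hx z => ?_⟩
    have h1 := (hC (x + (z * a) • v)).trans (add_le_add_right (norm_pt_le a v x z) C)
    refine h1.trans ?_
    rw [← Real.exp_add]
    have := norm_le_of_ball hx
    linarith [Real.add_one_le_exp (C + (‖x₀‖ + 1) + |a| * ‖v‖ * |z|)]
  · have h1 : Continuous (Nm m a v g (fun _ => 1)) := cont_Nm hm hg (CB.const 1)
    have h2 := fun x => (Nm_one_pos (a := a) (v := v) hm hg x).ne'
    have h3 : Continuous (fun x => m⁻¹ * Real.log (Nm m a v g (fun _ => 1) x)) :=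
      continuous_const.mul (h1.log h2)
    simpa only [Nm, mul_one] using h3

/-- Line derivative of a Parisi step. -/
lemma Tst_line (hm : 0 ≤ m) (hg : Adm g) {g' : (S → ℝ) → ℝ}
    (hg' : CB g') (y : S → ℝ)
    (dg : ∀ x s, HasDerivAt (fun s : ℝ => g (x + s • y)) (g' (x + s • y)) s) (x : S → ℝ) (s : ℝ) :
    HasDerivAt (fun s : ℝ => Tst m a v g (x + s • y)) (Av m a v g g' (x + s • y)) s := by
  by_cases h0 : m = 0
  · subst h0
    simp only [Tst, if_true, Av, Nm, zero_mul, Real.exp_zero, one_mul, integral_const,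
      probReal_univ, smul_eq_mul, div_one]
    have e : ∀ (s z : ℝ), x + s • y + (z * a) • v = (x + (z * a) • v) + s • y := fun s z => by abel
    have hp : Continuous (fun z : ℝ => x + s • y + (z * a) • v) := by fun_prop
    refine gauss_deriv s (F := fun s z => g (x + s • y + (z * a) • v))
      (F' := fun s z => g' (x + s • y + (z * a) • v)) (fun s z => ?_) (fun s => expBd_g hg _)
      (hg'.1.comp hp) ?_
    · simp only [e]; exact dg _ _
    · obtain ⟨_, C, hC⟩ := hg'
      exact ⟨C, 0, fun r _ z => by simpa using hC _⟩
  · have h1 := Nm_line (a := a) (v := v) hm hg (CB.const 1) (CB.const 0) hg' y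
      (fun x s => hasDerivAt_const s (1 : ℝ)) dg x s
    have hpos := Nm_one_pos (a := a) (v := v) hm hg (x + s • y)
    have h2 := (h1.log hpos.ne').const_mul m⁻¹
    have e : (fun s : ℝ => Tst m a v g (x + s • y)) =
        fun s : ℝ => m⁻¹ * Real.log (Nm m a v g (fun _ => 1) (x + s • y)) := by
      ext s; simp [Tst, Nm, h0]
    rw [e]
    refine h2.congr_deriv ?_
    simp only [zero_add, mul_one]
    rw [Nm_const_mul]
    unfold Av
    field_simp
end fixed
end


section
/-! ## Regular interpolating functionals and the elementary step -/

variable {S : Type*} [Fintype S]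

/-- Regularity package: `p` is the gradient, `H` the Hessian in space, and `d` the partial
derivative with respect to the interpolation parameter. -/
structure Reg (u : ℝ → (S → ℝ) → ℝ) (p : ℝ → S → (S → ℝ) → ℝ) (H : ℝ → S → S → (S → ℝ) → ℝ)
    (d : ℝ → (S → ℝ) → ℝ) : Prop where
  curve : ∀ X X' : ℝ → S → ℝ, (∀ t, HasDerivAt X (X' t) t) → Continuous X' → ∀ t,
    HasDerivAt (fun t => u t (X t)) (d t (X t) + ∑ σ, p t σ (X t) * X' t σ) t
  line : ∀ t y x s, HasDerivAt (fun s : ℝ => u t (x + s • y)) (∑ σ, y σ * p t σ (x + s • y)) s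
  linep : ∀ t σ y x s,
    HasDerivAt (fun s : ℝ => p t σ (x + s • y)) (∑ τ, y τ * H t σ τ (x + s • y)) s
  contu : ∀ t, Continuous (u t)
  contp : ∀ t σ, Continuous (p t σ)
  contH : ∀ t σ τ, Continuous (H t σ τ)
  contd : ∀ t, Continuous (d t)
  pnn : ∀ t σ x, 0 ≤ p t σ x
  psum : ∀ t x, ∑ σ, p t σ x = 1
  Hb : ∃ C, ∀ t σ τ x, |H t σ τ x| ≤ C
  db : ∃ C, ∀ t x, |d t x| ≤ C
  Hsum : ∀ t x, ∑ σ, ∑ τ, H t σ τ x = 0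
  ub : ∃ C, ∀ t x, |u t x| ≤ C + ‖x‖

namespace Reg
variable {u : ℝ → (S → ℝ) → ℝ} {p : ℝ → S → (S → ℝ) → ℝ} {H : ℝ → S → S → (S → ℝ) → ℝ}
    {d : ℝ → (S → ℝ) → ℝ}

lemma adm (h : Reg u p H d) (t : ℝ) : Adm (u t) := by
  obtain ⟨C, hC⟩ := h.ub
  exact ⟨h.contu t, C, hC t⟩

lemma p_abs (h : Reg u p H d) (t : ℝ) (σ : S) (x : S → ℝ) : |p t σ x| ≤ 1 := by
  rw [abs_of_nonneg (h.pnn t σ x), ← h.psum t x]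
  exact Finset.single_le_sum (fun τ _ => h.pnn t τ x) (Finset.mem_univ σ)

lemma cbp (h : Reg u p H d) (t : ℝ) (σ : S) : CB (p t σ) := ⟨h.contp t σ, 1, h.p_abs t σ⟩

lemma cbH (h : Reg u p H d) (t : ℝ) (σ τ : S) : CB (H t σ τ) := by
  obtain ⟨C, hC⟩ := h.Hb
  exact ⟨h.contH t σ τ, C, hC t σ τ⟩

lemma cbd (h : Reg u p H d) (t : ℝ) : CB (d t) := by
  obtain ⟨C, hC⟩ := h.db
  exact ⟨h.contd t, C, hC t⟩

end Reg

/-- The matrix `M = Hess + m ∇ ∇ᵀ`. -/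
def Mx (m : ℝ) (p : ℝ → S → (S → ℝ) → ℝ) (H : ℝ → S → S → (S → ℝ) → ℝ) (t : ℝ) (σ τ : S)
    (x : S → ℝ) : ℝ := H t σ τ x + m * (p t τ x * p t σ x)

lemma Reg.cbM {u : ℝ → (S → ℝ) → ℝ} {p : ℝ → S → (S → ℝ) → ℝ} {H : ℝ → S → S → (S → ℝ) → ℝ}
    {d : ℝ → (S → ℝ) → ℝ} (h : Reg u p H d) (m t : ℝ) (σ τ : S) : CB (Mx m p H t σ τ) :=
  (h.cbH t σ τ).add (CB.const_mul m ((h.cbp t τ).mul (h.cbp t σ)))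

/-- Step: new functional. -/
def uN (m : ℝ) (c : ℝ → ℝ) (v : S → ℝ) (u : ℝ → (S → ℝ) → ℝ) (t : ℝ) (x : S → ℝ) : ℝ :=
  Tst m (c t) v (u t) x

/-- Step: new gradient. -/
def pN (m : ℝ) (c : ℝ → ℝ) (v : S → ℝ) (u : ℝ → (S → ℝ) → ℝ) (p : ℝ → S → (S → ℝ) → ℝ)
    (t : ℝ) (σ : S) (x : S → ℝ) : ℝ := Av m (c t) v (u t) (p t σ) x

/-- Step: new Hessian. -/
def HN (m : ℝ) (c : ℝ → ℝ) (v : S → ℝ) (u : ℝ → (S → ℝ) → ℝ) (p : ℝ → S → (S → ℝ) → ℝ)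
    (H : ℝ → S → S → (S → ℝ) → ℝ) (t : ℝ) (σ τ : S) (x : S → ℝ) : ℝ :=
  Av m (c t) v (u t) (Mx m p H t σ τ) x - m * (pN m c v u p t τ x * pN m c v u p t σ x)

/-- Step: new time derivative. -/
def dN (m : ℝ) (c c' : ℝ → ℝ) (v : S → ℝ) (u : ℝ → (S → ℝ) → ℝ) (p : ℝ → S → (S → ℝ) → ℝ)
    (H : ℝ → S → S → (S → ℝ) → ℝ) (d : ℝ → (S → ℝ) → ℝ) (t : ℝ) (x : S → ℝ) : ℝ :=
  Av m (c t) v (u t) (d t) x +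
    c t * c' t * ∑ σ, ∑ τ, v σ * v τ * Av m (c t) v (u t) (Mx m p H t σ τ) x

section step
variable {u : ℝ → (S → ℝ) → ℝ} {p : ℝ → S → (S → ℝ) → ℝ} {H : ℝ → S → S → (S → ℝ) → ℝ}
    {d : ℝ → (S → ℝ) → ℝ} {m : ℝ} {c c' : ℝ → ℝ} {v : S → ℝ}

/-- Local boundedness of curves. -/
lemma loc_bdd {X : ℝ → S → ℝ} (hX : Continuous X) (t : ℝ) :
    ∃ R, ∀ s ∈ Metric.ball t 1, ‖X s‖ ≤ R := by
  obtain ⟨R, hR⟩ := (isCompact_closedBall t 1).exists_bound_of_continuousOn hX.continuousOn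
  exact ⟨R, fun s hs => hR s (Metric.ball_subset_closedBall hs)⟩

/-- The IBP identity for the interpolation derivative. -/
lemma step_ibp (h : Reg u p H d) (hm : 0 ≤ m) (t : ℝ) (x : S → ℝ) (a : ℝ) :
    ∫ z, z * (Real.exp (m * u t (x + (z * a) • v)) * ∑ σ, v σ * p t σ (x + (z * a) • v)) ∂stdGauss
    = a * ∑ σ, ∑ τ, v σ * v τ * Nm m a v (u t) (Mx m p H t σ τ) x := by
  have hf : CB (fun x => ∑ σ, v σ * p t σ x) := CB.sum _ fun σ => CB.const_mul _ (h.cbp t σ)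
  have hf' : CB (fun x => ∑ σ, v σ * ∑ τ, v τ * H t σ τ x) :=
    CB.sum _ fun σ => CB.const_mul _ (CB.sum _ fun τ => CB.const_mul _ (h.cbH t σ τ))
  rw [Nm_ibp (f := fun x => ∑ σ, v σ * p t σ x) hm (h.adm t) hf hf' hf
    (fun x s => HasDerivAt.fun_sum fun σ _ => (h.linep t σ v x s).const_mul (v σ))
    (fun x s => h.line t v x s) x]
  congr 1
  have e : (fun x => (∑ σ, v σ * ∑ τ, v τ * H t σ τ x) +
      m * ((∑ σ, v σ * p t σ x) * ∑ σ, v σ * p t σ x)) =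
      fun x => ∑ σ, ∑ τ, (v σ * v τ) * Mx m p H t σ τ x := by
    ext x
    simp only [Mx, mul_add, Finset.sum_add_distrib, Finset.mul_sum, Finset.sum_mul]
    congr 1
    · refine Finset.sum_congr rfl fun σ _ => Finset.sum_congr rfl fun τ _ => by ring
    · refine Finset.sum_congr rfl fun σ _ => Finset.sum_congr rfl fun τ _ => by ring
  rw [e, Nm_sum hm (h.adm t) _ (fun σ => CB.sum _ fun τ => CB.const_mul _ (h.cbM m t σ τ))]
  refine Finset.sum_congr rfl fun σ _ => ?_
  rw [Nm_sum hm (h.adm t) _ (fun τ => CB.const_mul _ (h.cbM m t σ τ))]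
  exact Finset.sum_congr rfl fun τ _ => Nm_const_mul _ _ _

/-- Differentiation of the integrals along a curve. -/
lemma step_curve_aux (h : Reg u p H d) (hm : 0 ≤ m) (hc : ∀ t, HasDerivAt c (c' t) t)
    (hc' : Continuous c') (X X' : ℝ → S → ℝ)
    (hX : ∀ t, HasDerivAt X (X' t) t) (hX' : Continuous X') (t z : ℝ) :
    HasDerivAt (fun t => u t (X t + (z * c t) • v))
      (d t (X t + (z * c t) • v) + (∑ σ, X' t σ * p t σ (X t + (z * c t) • v)) +
        c' t * (z * ∑ σ, v σ * p t σ (X t + (z * c t) • v))) t := by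
  have hcurve : ∀ t, HasDerivAt (fun t => X t + (z * c t) • v) (X' t + (z * c' t) • v) t :=
    fun t => (hX t).add (((hc t).const_mul z).smul_const v)
  refine (h.curve (fun t => X t + (z * c t) • v) (fun t => X' t + (z * c' t) • v) hcurve
    (by fun_prop) t).congr_deriv ?_
  rw [add_assoc]
  congr 1
  simp only [Finset.mul_sum, ← Finset.sum_add_distrib]
  refine Finset.sum_congr rfl fun σ _ => ?_
  simp only [Pi.add_apply, Pi.smul_apply, smul_eq_mul]
  ring

lemma sum_p_le (h : Reg u p H d) (t : ℝ) (x y : S → ℝ) : |∑ σ, y σ * p t σ x| ≤ ‖y‖ := by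
  refine (Finset.abs_sum_le_sum_abs _ _).trans ?_
  calc ∑ σ, |y σ * p t σ x| ≤ ∑ σ, ‖y‖ * p t σ x := by
        refine Finset.sum_le_sum fun σ _ => ?_
        rw [abs_mul, abs_of_nonneg (h.pnn t σ x)]
        exact mul_le_mul_of_nonneg_right (norm_le_pi_norm y σ) (h.pnn t σ x)
    _ = ‖y‖ := by rw [← Finset.mul_sum, h.psum, mul_one]

lemma step_curve (h : Reg u p H d) (hm : 0 ≤ m) (hc : ∀ t, HasDerivAt c (c' t) t)
    (hc' : Continuous c') (hc1 : ∀ t, |c t| ≤ 1) (hc1' : ∀ t, |c' t| ≤ 1) (X X' : ℝ → S → ℝ)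
    (hX : ∀ t, HasDerivAt X (X' t) t) (hX' : Continuous X') (t : ℝ) :
    HasDerivAt (fun t => uN m c v u t (X t))
      (dN m c c' v u p H d t (X t) + ∑ σ, pN m c v u p t σ (X t) * X' t σ) t := by
  have hXc : Continuous X := continuous_iff_continuousAt.2 fun t => (hX t).continuousAt
  obtain ⟨Cd, hCd⟩ := h.db
  obtain ⟨Cu, hCu⟩ := h.ub
  obtain ⟨R, hR⟩ := loc_bdd hXc t
  obtain ⟨R', hR'⟩ := loc_bdd hX' t
  have hCd0 : 0 ≤ Cd := (abs_nonneg _).trans (hCd 0 0)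
  have hR'0 : 0 ≤ R' := (norm_nonneg _).trans (hR' t (Metric.mem_ball_self one_pos))
  -- the integrand derivative
  set D : ℝ → ℝ → ℝ := fun t z => d t (X t + (z * c t) • v) +
    (∑ σ, X' t σ * p t σ (X t + (z * c t) • v)) +
        c' t * (z * ∑ σ, v σ * p t σ (X t + (z * c t) • v)) with hD
  have hDb : ∀ s ∈ Metric.ball t 1, ∀ z, |D s z| ≤ (Cd + R' + ‖v‖) * Real.exp (1 * |z|) := by
    intro s hs z
    have h1 := hCd s (X s + (z * c s) • v)
    have h2 := (sum_p_le h s (X s + (z * c s) • v) (X' s)).trans (hR' s hs)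
    have h3 := sum_p_le h s (X s + (z * c s) • v) v
    have h4 : |c' s * (z * ∑ σ, v σ * p s σ (X s + (z * c s) • v))| ≤ 1 * (|z| * ‖v‖) := by
      rw [abs_mul, abs_mul]
      have := hc1' s
      gcongr
    have h5 : |D s z| ≤ Cd + R' + 1 * (|z| * ‖v‖) :=
      (abs_add_le _ _).trans (add_le_add ((abs_add_le _ _).trans (add_le_add h1 h2)) h4)
    have h6 : 1 ≤ Real.exp (1 * |z|) := Real.one_le_exp (by positivity)
    have h7 : |z| ≤ Real.exp (1 * |z|) := by simpa using abs_le_exp_abs z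
    have h8 := mul_le_mul_of_nonneg_right h7 (norm_nonneg v)
    have h9 := mul_le_mul_of_nonneg_left h6 (add_nonneg hCd0 hR'0)
    linarith
  have hder := fun t z => step_curve_aux (v := v) h hm hc hc' X X' hX hX' t z
  have hpt : Continuous (fun z : ℝ => X t + (z * c t) • v) := by fun_prop
  have hDc : Continuous (D t) := by
    refine (((h.contd t).comp hpt).add ?_).add ?_
    · exact continuous_finsetSum _ fun σ _ => continuous_const.mul ((h.contp t σ).comp hpt)
    · exact continuous_const.mul (continuous_id.mul
        (continuous_finsetSum _ fun σ _ => continuous_const.mul ((h.contp t σ).comp hpt)))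
  -- evaluate the weighted integral of `D`
  have cb1 : CB (fun x => ∑ σ, X' t σ * p t σ x) := CB.sum _ fun σ => CB.const_mul _ (h.cbp t σ)
  have cb2 : CB (fun x => ∑ σ, v σ * p t σ x) := CB.sum _ fun σ => CB.const_mul _ (h.cbp t σ)
  have eval : ∫ z, Real.exp (m * u t (X t + (z * c t) • v)) * D t z ∂stdGauss =
      (dN m c c' v u p H d t (X t) + ∑ σ, pN m c v u p t σ (X t) * X' t σ) *
        Nm m (c t) v (u t) (fun _ => 1) (X t) := by
    have hpos := Nm_one_pos (a := c t) (v := v) hm (h.adm t) (X t)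
    have e1 : ∫ z, Real.exp (m * u t (X t + (z * c t) • v)) * D t z ∂stdGauss =
        Nm m (c t) v (u t) (fun x => d t x + ∑ σ, X' t σ * p t σ x) (X t) +
        c' t * ∫ z, z * (Real.exp (m * u t (X t + (z * c t) • v)) *
          ∑ σ, v σ * p t σ (X t + (z * c t) • v)) ∂stdGauss := by
      unfold Nm
      rw [← integral_const_mul, ← integral_add
        (expBd_wt hm (h.adm t) ((h.cbd t).add cb1) _).integrable
        ((expBd_wt hm (h.adm t) cb2 _).id_mul.integrable.const_mul _)]
      congr 1; ext z
      simp only [hD]; ring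
    rw [e1, step_ibp h hm, Nm_add hm (h.adm t) (h.cbd t) cb1,
      Nm_sum hm (h.adm t) _ (fun σ => CB.const_mul _ (h.cbp t σ))]
    simp only [dN, pN, Nm_const_mul, Av, add_mul, Finset.sum_mul, Finset.mul_sum]
    rw [div_mul_cancel₀ _ hpos.ne', add_assoc, add_assoc]
    congr 1
    rw [add_comm]
    congr 1
    · refine Finset.sum_congr rfl fun σ _ => Finset.sum_congr rfl fun τ _ => ?_
      field_simp
    · refine Finset.sum_congr rfl fun σ _ => ?_
      field_simp
  unfold uN
  by_cases h0 : m = 0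
  · have e0 : (fun t => Tst m (c t) v (u t) (X t)) =
        fun t => ∫ z, u t (X t + (z * c t) • v) ∂stdGauss := by
      ext t; simp [Tst, h0]
    rw [e0]
    have := gauss_deriv t (F := fun t z => u t (X t + (z * c t) • v)) (F' := D) hder
      (fun s => expBd_g (h.adm s) _) hDc ⟨_, _, hDb⟩
    refine this.congr_deriv ?_
    have e2 : Nm m (c t) v (u t) (fun _ => 1) (X t) = 1 := by simp [Nm, h0]
    rw [e2, mul_one] at eval
    rw [← eval]
    simp [h0]
  · have e0 : (fun t => Tst m (c t) v (u t) (X t)) =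
        fun t => m⁻¹ * Real.log (∫ z, Real.exp (m * u t (X t + (z * c t) • v)) ∂stdGauss) := by
      ext t; simp [Tst, h0]
    rw [e0]
    have hpos := Nm_one_pos (a := c t) (v := v) hm (h.adm t) (X t)
    have e2 : Nm m (c t) v (u t) (fun _ => 1) (X t) =
      ∫ z, Real.exp (m * u t (X t + (z * c t) • v)) ∂stdGauss := by simp [Nm]
    have := gauss_deriv t (F := fun t z => Real.exp (m * u t (X t + (z * c t) • v)))
      (F' := fun t z => Real.exp (m * u t (X t + (z * c t) • v)) * (m * D t z))
      (fun t z => ((hder t z).const_mul m).exp)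
      (fun s => by simpa using expBd_wt (a := c s) (v := v) hm (h.adm s) (CB.const 1) (X s))
      ((Real.continuous_exp.comp (continuous_const.mul ((h.contu t).comp hpt))).mul
        (continuous_const.mul hDc)) (by
        refine ⟨Real.exp (m * (Cu + R)) * (m * (Cd + R' + ‖v‖)), m * (1 * ‖v‖) + 1,
          fun s hs z => ?_⟩
        rw [abs_mul, abs_mul, Real.abs_exp, abs_of_nonneg hm]
        have w1 := wt_le (a := c s) (v := v) hm (hCu s) (hR s hs) z
        have w2 : Real.exp (m * (|c s| * ‖v‖) * |z|) ≤ Real.exp (m * (1 * ‖v‖) * |z|) := by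
          have := hc1 s
          gcongr
        have w3 := hDb s hs z
        calc _ ≤ (Real.exp (m * (Cu + R)) * Real.exp (m * (1 * ‖v‖) * |z|)) *
              (m * ((Cd + R' + ‖v‖) * Real.exp (1 * |z|))) := by
              refine mul_le_mul (w1.trans ?_) ?_ (by positivity) (by positivity)
              · gcongr
              · gcongr
          _ = _ := by rw [add_mul (m * (1 * ‖v‖)) 1 |z|, Real.exp_add]; ring)
    rw [e2] at hpos eval
    refine ((this.log hpos.ne').const_mul m⁻¹).congr_deriv ?_
    have e3 : ∫ z, Real.exp (m * u t (X t + (z * c t) • v)) * (m * D t z) ∂stdGauss =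
        m * ∫ z, Real.exp (m * u t (X t + (z * c t) • v)) * D t z ∂stdGauss := by
      rw [← integral_const_mul]; congr 1; ext z; ring
    rw [e3, eval, mul_div_assoc, mul_div_assoc, div_self hpos.ne', mul_one, ← mul_assoc,
      inv_mul_cancel₀ h0, one_mul]

lemma pN_sum (h : Reg u p H d) (hm : 0 ≤ m) (t : ℝ) (x : S → ℝ) :
    ∑ σ, pN m c v u p t σ x = 1 := by
  unfold pN
  rw [← Av_sum hm (h.adm t) _ (fun σ => h.cbp t σ)]
  simp only [h.psum]
  exact Av_one hm (h.adm t) x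

lemma pN_abs (h : Reg u p H d) (hm : 0 ≤ m) (t : ℝ) (σ : S) (x : S → ℝ) :
    |pN m c v u p t σ x| ≤ 1 := Av_abs_le hm (h.adm t) (h.cbp t σ) (h.p_abs t σ) x

lemma step_reg (h : Reg u p H d) (hm : 0 ≤ m) (hc : ∀ t, HasDerivAt c (c' t) t)
    (hc' : Continuous c') (hc1 : ∀ t, |c t| ≤ 1) (hc1' : ∀ t, |c' t| ≤ 1) :
    Reg (uN m c v u) (pN m c v u p) (HN m c v u p H) (dN m c c' v u p H d) := by
  obtain ⟨CH, hCH⟩ := h.Hb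
  obtain ⟨Cd, hCd⟩ := h.db
  have hMb : ∀ t σ τ x, |Mx m p H t σ τ x| ≤ CH + m * (1 * 1) := by
    intro t σ τ x
    refine (abs_add_le _ _).trans (add_le_add (hCH t σ τ x) ?_)
    rw [abs_mul, abs_mul, abs_of_nonneg hm]
    have h1 := h.p_abs t τ x
    have h2 := h.p_abs t σ x
    gcongr
  refine ⟨?_, ?_, ?_, ?_, ?_, ?_, ?_, ?_, ?_, ?_, ?_, ?_, ?_⟩
  · exact fun X X' hX hX' t => step_curve h hm hc hc' hc1 hc1' X X' hX hX' t
  · intro t y x s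
    have cb : CB (fun x => ∑ σ, y σ * p t σ x) := CB.sum _ fun σ => CB.const_mul _ (h.cbp t σ)
    refine (Tst_line hm (h.adm t) cb y (h.line t y) x s).congr_deriv ?_
    rw [Av_sum hm (h.adm t) _ (fun σ => CB.const_mul _ (h.cbp t σ))]
    simp only [Av_const_mul, pN]
  · intro t σ y x s
    have cb : CB (fun x => ∑ σ, y σ * p t σ x) := CB.sum _ fun σ => CB.const_mul _ (h.cbp t σ)
    have cbH : CB (fun x => ∑ τ, y τ * H t σ τ x) := CB.sum _ fun τ => CB.const_mul _ (h.cbH t σ τ)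
    have h1 := Nm_line (a := c t) (v := v) hm (h.adm t) (h.cbp t σ) cbH cb y (h.linep t σ y)
      (h.line t y) x s
    have h2 := Nm_line (a := c t) (v := v) hm (h.adm t) (CB.const 1) (CB.const 0) cb y
      (fun x s => hasDerivAt_const s (1 : ℝ)) (h.line t y) x s
    have hpos := Nm_one_pos (a := c t) (v := v) hm (h.adm t) (x + s • y)
    refine (h1.div h2 hpos.ne').congr_deriv ?_
    have e1 : (fun x => (∑ τ, y τ * H t σ τ x) + m * ((∑ τ, y τ * p t τ x) * p t σ x)) =
        fun x => ∑ τ, y τ * Mx m p H t σ τ x := by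
      ext x
      simp only [Mx, mul_add, Finset.sum_add_distrib, Finset.mul_sum, Finset.sum_mul]
      congr 1
      exact Finset.sum_congr rfl fun τ _ => by ring
    rw [e1, Nm_sum hm (h.adm t) _ (fun τ => CB.const_mul _ (h.cbM m t σ τ))]
    simp only [zero_add, mul_one]
    rw [Nm_const_mul, Nm_sum hm (h.adm t) _ (fun τ => CB.const_mul _ (h.cbp t τ))]
    simp only [Nm_const_mul, HN, pN, Av, mul_sub, Finset.sum_sub_distrib, Finset.mul_sum,
      Finset.sum_mul]
    rw [sub_div, Finset.sum_div, Finset.sum_div, ]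
    congr 1
    · refine Finset.sum_congr rfl fun τ _ => ?_
      field_simp
    · refine Finset.sum_congr rfl fun τ _ => ?_
      field_simp
  · exact fun t => cont_Tst hm (h.adm t)
  · exact fun t σ => cont_Av hm (h.adm t) (h.cbp t σ)
  · intro t σ τ
    exact (cont_Av hm (h.adm t) (h.cbM m t σ τ)).sub (continuous_const.mul
      ((cont_Av hm (h.adm t) (h.cbp t τ)).mul (cont_Av hm (h.adm t) (h.cbp t σ))))
  · intro t
    exact (cont_Av hm (h.adm t) (h.cbd t)).add (continuous_const.mul
      (continuous_finsetSum _ fun σ _ => continuous_finsetSum _ fun τ _ => continuous_const.mul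
        (cont_Av hm (h.adm t) (h.cbM m t σ τ))))
  · intro t σ x
    unfold pN
    rw [← Av_const (a := c t) (v := v) hm (h.adm t) 0 x]
    exact Av_mono hm (h.adm t) (CB.const 0) (h.cbp t σ) (h.pnn t σ) x
  · exact fun t x => pN_sum h hm t x
  · refine ⟨CH + m * (1 * 1) + m * (1 * 1), fun t σ τ x => ?_⟩
    refine (abs_sub _ _).trans (add_le_add (Av_abs_le hm (h.adm t) (h.cbM m t σ τ)
      (hMb t σ τ) x) ?_)
    rw [abs_mul, abs_mul, abs_of_nonneg hm]
    have h1 := pN_abs (c := c) (v := v) h hm t τ x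
    have h2 := pN_abs (c := c) (v := v) h hm t σ x
    gcongr
  · refine ⟨Cd + 1 * 1 * ∑ σ, ∑ τ, |v σ * v τ| * (CH + m * (1 * 1)), fun t x => ?_⟩
    refine (abs_add_le _ _).trans (add_le_add (Av_abs_le hm (h.adm t) (h.cbd t) (hCd t) x) ?_)
    rw [abs_mul, abs_mul]
    have h1 := hc1 t
    have h2 := hc1' t
    have h3 : |∑ σ, ∑ τ, v σ * v τ * Av m (c t) v (u t) (Mx m p H t σ τ) x| ≤
        ∑ σ, ∑ τ, |v σ * v τ| * (CH + m * (1 * 1)) := by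
      refine (Finset.abs_sum_le_sum_abs _ _).trans (Finset.sum_le_sum fun σ _ => ?_)
      refine (Finset.abs_sum_le_sum_abs _ _).trans (Finset.sum_le_sum fun τ _ => ?_)
      rw [abs_mul]
      exact mul_le_mul_of_nonneg_left (Av_abs_le hm (h.adm t) (h.cbM m t σ τ)
        (hMb t σ τ) x) (abs_nonneg _)
    gcongr
  · intro t x
    have e1 : ∑ σ, ∑ τ, Av m (c t) v (u t) (Mx m p H t σ τ) x = m := by
      have e0 : (fun _ : S → ℝ => m) = fun x => ∑ σ, ∑ τ, Mx m p H t σ τ x := by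
        ext x
        simp only [Mx, Finset.sum_add_distrib, h.Hsum, zero_add, ← Finset.mul_sum,
          ← Finset.sum_mul, h.psum, mul_one]
      have e2 := Av_const (a := c t) (v := v) hm (h.adm t) m x
      rw [e0, Av_sum hm (h.adm t) _ (fun σ => CB.sum _ fun τ => h.cbM m t σ τ)] at e2
      refine Eq.trans ?_ e2
      exact Finset.sum_congr rfl fun σ _ => (Av_sum hm (h.adm t) _ (h.cbM m t σ) x).symm
    simp only [HN, Finset.sum_sub_distrib, e1, ← Finset.mul_sum, ← Finset.sum_mul,
      pN_sum h hm, mul_one, sub_self]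
  · obtain ⟨C, hC⟩ := h.ub
    exact ⟨_, fun t x => Tst_growth hm (hc1 t) (h.contu t) (hC t) x⟩

/-- The invariant driving Guerra's broken replica symmetry bound. -/
def GInv (u : ℝ → (S → ℝ) → ℝ) (D : S → S → ℝ) (m L : ℝ) : Prop :=
  ∃ p H d, Reg u p H d ∧ ∀ t ∈ Set.Icc 0 (Real.pi / 2), ∀ x,
    d t x + (Real.sin t * Real.cos t) * ∑ σ, ∑ τ, D σ τ * Mx m p H t σ τ x
      ≤ (Real.sin t * Real.cos t) * L

lemma GInv.step {D : S → S → ℝ} {L ε : ℝ} (h : GInv u D m L) (hm : 0 ≤ m)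
    (hc : ∀ t, HasDerivAt c (c' t) t)
    (hc' : Continuous c') (hc1 : ∀ t, |c t| ≤ 1) (hc1' : ∀ t, |c' t| ≤ 1)
    (hcc : ∀ t, c t * c' t = - ε * (Real.sin t * Real.cos t)) (v : S → ℝ) :
    GInv (uN m c v u) (fun σ τ => D σ τ + ε * (v σ * v τ)) m L := by
  obtain ⟨p, H, d, hr, hi⟩ := h
  refine ⟨_, _, _, step_reg hr hm hc hc' hc1 hc1', fun t ht x => ?_⟩
  have e : ∀ σ τ, Mx m (pN m c v u p) (HN m c v u p H) t σ τ x =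
      Av m (c t) v (u t) (Mx m p H t σ τ) x := fun σ τ => by
    rw [Mx, HN]; ring
  simp only [e, dN, hcc]
  have cb : CB (fun x => ∑ σ, ∑ τ, D σ τ * Mx m p H t σ τ x) :=
    CB.sum _ fun σ => CB.sum _ fun τ => CB.const_mul _ (hr.cbM m t σ τ)
  have key := Av_mono (a := c t) (v := v) hm (hr.adm t)
    ((hr.cbd t).add (CB.const_mul (Real.sin t * Real.cos t) cb))
    (CB.const ((Real.sin t * Real.cos t) * L)) (hi t ht) x
  rw [Av_const hm (hr.adm t), Av_add hm (hr.adm t) (hr.cbd t)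
    (CB.const_mul (Real.sin t * Real.cos t) cb), Av_const_mul,
    Av_sum hm (hr.adm t) _ (fun σ => CB.sum _ fun τ => CB.const_mul _ (hr.cbM m t σ τ))] at key
  have e2 : ∀ σ, Av m (c t) v (u t) (fun x => ∑ τ, D σ τ * Mx m p H t σ τ x) x =
      ∑ τ, D σ τ * Av m (c t) v (u t) (Mx m p H t σ τ) x := fun σ => by
    rw [Av_sum hm (hr.adm t) _ (fun τ => CB.const_mul _ (hr.cbM m t σ τ))]
    simp only [Av_const_mul]
  simp only [e2] at key
  refine le_trans (le_of_eq ?_) key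
  simp only [add_mul, Finset.sum_add_distrib]
  have e3 : ∑ σ, ∑ τ, ε * (v σ * v τ) * Av m (c t) v (u t) (Mx m p H t σ τ) x =
      ε * ∑ σ, ∑ τ, v σ * v τ * Av m (c t) v (u t) (Mx m p H t σ τ) x := by
    simp only [Finset.mul_sum, mul_assoc]
  rw [e3]; ring

/-- Adding a multiple of the all-ones matrix. -/
lemma GInv.shift {D D' : S → S → ℝ} {L k : ℝ} (h : GInv u D m L) (hD : ∀ σ τ, D σ τ = D' σ τ + k) :
    GInv u D' m (L - k * m) := by
  obtain ⟨p, H, d, hr, hi⟩ := h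
  refine ⟨p, H, d, hr, fun t ht x => ?_⟩
  have := hi t ht x
  have e : ∑ σ, ∑ τ, Mx m p H t σ τ x = m := by
    simp only [Mx, Finset.sum_add_distrib, hr.Hsum, zero_add, ← Finset.mul_sum,
      ← Finset.sum_mul, hr.psum, mul_one]
  simp only [hD, add_mul, Finset.sum_add_distrib, ← Finset.mul_sum, e] at this
  linarith

/-- Lowering `m`. -/
lemma GInv.lower {D : S → S → ℝ} {L m' : ℝ} (h : GInv u D m L) (hD : ∀ σ τ, 0 ≤ D σ τ)
    (hm : m' ≤ m) : GInv u D m' L := by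
  obtain ⟨p, H, d, hr, hi⟩ := h
  refine ⟨p, H, d, hr, fun t ht x => le_trans ?_ (hi t ht x)⟩
  have hk : 0 ≤ Real.sin t * Real.cos t :=
    mul_nonneg (Real.sin_nonneg_of_nonneg_of_le_pi ht.1 (by linarith [ht.2, Real.pi_pos]))
      (Real.cos_nonneg_of_mem_Icc ⟨by linarith [ht.1, Real.pi_pos], ht.2⟩)
  gcongr with σ _ τ _
  · exact hD σ τ
  · unfold Mx
    have := mul_nonneg (hr.pnn t τ x) (hr.pnn t σ x)
    gcongr
end step
end


section
/-! ## Base case and iteration -/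

section base
variable {S : Type*} [Fintype S]

/-- The log-sum-exp functional. -/
def LSE (x : S → ℝ) : ℝ := Real.log (∑ σ, Real.exp (x σ))

/-- The Gibbs weights. -/
def sm (σ : S) (x : S → ℝ) : ℝ := Real.exp (x σ) / ∑ τ, Real.exp (x τ)

/-- The Hessian of log-sum-exp. -/
def smH [DecidableEq S] (σ τ : S) (x : S → ℝ) : ℝ := (if σ = τ then sm σ x else 0) - sm σ x * sm τ x

lemma Zpos [Nonempty S] (x : S → ℝ) : 0 < ∑ σ, Real.exp (x σ) :=
  Finset.sum_pos (fun σ _ => Real.exp_pos _) Finset.univ_nonempty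

lemma sm_nonneg (σ : S) (x : S → ℝ) : 0 ≤ sm σ x := by
  unfold sm; positivity

lemma sm_sum [Nonempty S] (x : S → ℝ) : ∑ σ, sm σ x = 1 := by
  unfold sm
  rw [← Finset.sum_div, div_self (Zpos x).ne']

lemma sm_cont [Nonempty S] (σ : S) : Continuous (sm σ) := by
  unfold sm
  exact Continuous.div (by fun_prop) (by fun_prop) fun x => (Zpos x).ne'

lemma LSE_curve [Nonempty S] {X : ℝ → S → ℝ} {X' : S → ℝ} {t : ℝ} (h : HasDerivAt X X' t) :
    HasDerivAt (fun t => LSE (X t)) (∑ σ, sm σ (X t) * X' σ) t := by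
  have h1 := fun σ => (hasDerivAt_pi.1 h σ).exp
  have h2 : HasDerivAt (fun t => ∑ σ, Real.exp (X t σ)) (∑ σ, Real.exp (X t σ) * X' σ) t :=
    HasDerivAt.fun_sum fun σ _ => h1 σ
  refine (h2.log (Zpos _).ne').congr_deriv ?_
  rw [Finset.sum_div]
  exact Finset.sum_congr rfl fun σ _ => by unfold sm; ring

lemma LSE_bd [Nonempty S] (x : S → ℝ) : |LSE x| ≤ Real.log (Fintype.card S) + ‖x‖ := by
  have hc : 0 < (Fintype.card S : ℝ) := by exact_mod_cast Fintype.card_pos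
  have hc1 : (1 : ℝ) ≤ (Fintype.card S : ℝ) := by exact_mod_cast Fintype.card_pos
  have hn : ∀ σ, |x σ| ≤ ‖x‖ := fun σ => norm_le_pi_norm x σ
  have hl := Real.log_nonneg hc1
  rw [abs_le]
  unfold LSE
  constructor
  · obtain ⟨σ⟩ := (inferInstance : Nonempty S)
    have h1 : Real.exp (x σ) ≤ ∑ σ, Real.exp (x σ) :=
      Finset.single_le_sum (f := fun σ => Real.exp (x σ)) (fun τ _ => (Real.exp_pos _).le)
        (Finset.mem_univ σ)
    have h2 := Real.log_le_log (Real.exp_pos _) h1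
    rw [Real.log_exp] at h2
    have := (abs_le.1 (hn σ)).1
    linarith
  · have h1 : ∑ σ, Real.exp (x σ) ≤ Fintype.card S * Real.exp ‖x‖ := by
      calc ∑ σ, Real.exp (x σ) ≤ ∑ _σ : S, Real.exp ‖x‖ :=
            Finset.sum_le_sum fun σ _ => Real.exp_le_exp.2 ((le_abs_self _).trans (hn σ))
        _ = _ := by simp
    have h2 := Real.log_le_log (Zpos x) h1
    rwa [Real.log_mul hc.ne' (Real.exp_pos _).ne', Real.log_exp] at h2

lemma sm_line [Nonempty S] [DecidableEq S] (σ : S) (y x : S → ℝ) (s : ℝ) :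
    HasDerivAt (fun s : ℝ => sm σ (x + s • y)) (∑ τ, y τ * smH σ τ (x + s • y)) s := by
  have h0 : ∀ σ, HasDerivAt (fun s : ℝ => (x + s • y) σ) (y σ) s := fun σ => by
    have := ((hasDerivAt_id s).mul_const (y σ)).const_add (x σ)
    simpa using this
  have h1 := fun σ => (h0 σ).exp
  have h2 : HasDerivAt (fun s : ℝ => ∑ σ, Real.exp ((x + s • y) σ))
      (∑ σ, Real.exp ((x + s • y) σ) * y σ) s :=
    HasDerivAt.fun_sum fun σ _ => h1 σ
  refine ((h1 σ).div h2 (Zpos _).ne').congr_deriv ?_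
  generalize x + s • y = w
  have hw := (Zpos w).ne'
  simp only [smH, mul_sub, Finset.sum_sub_distrib, mul_ite, mul_zero, Finset.sum_ite_eq,
    Finset.mem_univ, if_true]
  have e : ∑ τ, y τ * (sm σ w * sm τ w) = sm σ w * ((∑ τ, Real.exp (w τ) * y τ) / ∑ τ, Real.exp (w τ)) := by
    rw [Finset.sum_div, Finset.mul_sum]
    refine Finset.sum_congr rfl fun τ _ => ?_
    unfold sm; ring
  rw [e]
  unfold sm
  field_simp

lemma base_reg [Nonempty S] [DecidableEq S] :
    Reg (fun _ => LSE (S := S)) (fun _ => sm) (fun _ => smH) (fun _ _ => 0) := by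
  have hsm1 : ∀ (σ : S) x, sm σ x ≤ 1 := fun σ x => by
    rw [← sm_sum x]
    exact Finset.single_le_sum (fun τ _ => sm_nonneg τ x) (Finset.mem_univ σ)
  have hline : ∀ (y x : S → ℝ) (s : ℝ), HasDerivAt (fun s : ℝ => x + s • y) y s := fun y x s => by
    have := ((hasDerivAt_id s).smul_const y).const_add x
    simpa using this
  refine ⟨?_, ?_, ?_, ?_, ?_, ?_, ?_, ?_, ?_, ?_, ?_, ?_, ?_⟩
  · intro X X' hX _ t
    simpa using LSE_curve (hX t)
  · intro t y x s
    refine (LSE_curve (hline y x s)).congr_deriv ?_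
    exact Finset.sum_congr rfl fun σ _ => mul_comm _ _
  · exact fun t σ y x s => sm_line σ y x s
  · exact fun t => Continuous.log (by fun_prop) fun x => (Zpos x).ne'
  · exact fun t σ => sm_cont σ
  · intro t σ τ
    unfold smH
    refine Continuous.sub ?_ ((sm_cont σ).mul (sm_cont τ))
    split_ifs
    · exact sm_cont σ
    · exact continuous_const
  · exact fun t => continuous_const
  · exact fun t σ x => sm_nonneg σ x
  · exact fun t x => sm_sum x
  · refine ⟨1, fun t σ τ x => ?_⟩
    have a1 := sm_nonneg σ x
    have a2 := sm_nonneg τ x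
    have a3 := hsm1 σ x
    have a4 := hsm1 τ x
    have a5 := mul_nonneg a1 a2
    have a6 : sm σ x * sm τ x ≤ 1 := mul_le_one₀ a3 a2 a4
    simp only [smH]
    rw [abs_le]
    split_ifs <;> constructor <;> linarith
  · exact ⟨0, fun t x => by simp⟩
  · intro t x
    simp only [smH, Finset.sum_sub_distrib, Finset.sum_ite_eq, Finset.mem_univ, if_true,
      ← Finset.mul_sum, sm_sum, mul_one, sub_self, Finset.sum_const_zero]
  · exact ⟨_, fun t x => LSE_bd x⟩

lemma base_ginv [Nonempty S] [DecidableEq S] {D : S → S → ℝ} (hD : ∀ σ, D σ σ = 0) :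
    GInv (fun _ => LSE (S := S)) D 1 0 := by
  refine ⟨_, _, _, base_reg, fun t _ x => ?_⟩
  have : ∑ σ, ∑ τ, D σ τ * Mx 1 (fun _ => sm) (fun _ => smH) t σ τ x = 0 := by
    refine Finset.sum_eq_zero fun σ _ => Finset.sum_eq_zero fun τ _ => ?_
    by_cases h : σ = τ
    · rw [h, hD, zero_mul]
    · simp only [Mx, smH, h, if_false]
      ring
  rw [this]; simp

/-- Iterated steps. -/
def foldU (m : ℝ) (c : ℝ → ℝ) (l : List (S → ℝ)) (u : ℝ → (S → ℝ) → ℝ) : ℝ → (S → ℝ) → ℝ :=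
  l.foldr (fun v u => uN m c v u) u

lemma GInv.fold {u : ℝ → (S → ℝ) → ℝ} {m : ℝ} {c c' : ℝ → ℝ} {D : S → S → ℝ} {L ε : ℝ}
    (h : GInv u D m L) (hm : 0 ≤ m)
    (hc : ∀ t, HasDerivAt c (c' t) t)
    (hc' : Continuous c') (hc1 : ∀ t, |c t| ≤ 1) (hc1' : ∀ t, |c' t| ≤ 1)
    (hcc : ∀ t, c t * c' t = - ε * (Real.sin t * Real.cos t)) (l : List (S → ℝ)) :
    GInv (foldU m c l u) (fun σ τ => D σ τ + ε * (l.map fun v => v σ * v τ).sum) m L := by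
  induction l with
  | nil => simpa [foldU] using h
  | cons v l ih =>
    have := ih.step hm hc hc' hc1 hc1' hcc v
    have e : (fun σ τ => D σ τ + ε * (l.map fun v => v σ * v τ).sum + ε * (v σ * v τ)) =
        fun σ τ => D σ τ + ε * ((v :: l).map fun v => v σ * v τ).sum := by
      ext σ τ; simp; ring
    rw [e] at this
    exact this

lemma GInv.fold_cos {u : ℝ → (S → ℝ) → ℝ} {m : ℝ} {D : S → S → ℝ} {L : ℝ}
    (h : GInv u D m L) (hm : 0 ≤ m) (l : List (S → ℝ)) :
    GInv (foldU m Real.cos l u) (fun σ τ => D σ τ + 1 * (l.map fun v => v σ * v τ).sum) m L :=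
  h.fold hm (c' := fun t => - Real.sin t) (fun t => Real.hasDerivAt_cos t) (by fun_prop)
    Real.abs_cos_le_one (fun t => by rw [abs_neg]; exact Real.abs_sin_le_one t)
    (fun t => by ring) l

lemma GInv.fold_sin {u : ℝ → (S → ℝ) → ℝ} {m : ℝ} {D : S → S → ℝ} {L : ℝ}
    (h : GInv u D m L) (hm : 0 ≤ m) (l : List (S → ℝ)) :
    GInv (foldU m Real.sin l u) (fun σ τ => D σ τ + (-1) * (l.map fun v => v σ * v τ).sum) m L :=
  h.fold hm (c' := fun t => Real.cos t) (fun t => Real.hasDerivAt_sin t) (by fun_prop)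
    Real.abs_sin_le_one Real.abs_cos_le_one
    (fun t => by ring) l

lemma GInv.congrD {u : ℝ → (S → ℝ) → ℝ} {m : ℝ} {D D' : S → S → ℝ} {L : ℝ}
    (h : GInv u D m L) (hD : ∀ σ τ, D σ τ = D' σ τ) : GInv u D' m L := by
  have : D = D' := by ext; exact hD _ _
  rwa [← this]
end base

/-! ## The chain of levels -/

/-- The Parisi directions at a level with increment `s`. -/
def vecP (N : ℕ) (β s : ℝ) : List ((Fin N → Bool) → ℝ) :=
  (List.finRange N).map fun i σ => β * Real.sqrt s * spin (σ i)

/-- The functional after `j` levels. -/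
def uLev (N K : ℕ) (q m : ℕ → ℝ) (β : ℝ) : ℕ → ℝ → ((Fin N → Bool) → ℝ) → ℝ
  | 0 => fun _ => LSE
  | j + 1 => foldU (m (K - j)) Real.cos (vecP N β (q (K - j) - q (K - j - 1))) (uLev N K q m β j)

/-- The quadratic overlap matrix. -/
def Dq (N : ℕ) (β q : ℝ) (σ τ : Fin N → Bool) : ℝ := β ^ 2 * N / 2 * (overlap N σ τ - q) ^ 2

lemma spin_sq (b : Bool) : spin b * spin b = 1 := by cases b <;> simp [spin]

lemma N_overlap (N : ℕ) (hN : 1 ≤ N) (σ τ : Fin N → Bool) :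
    N * overlap N σ τ = ∑ i, spin (σ i) * spin (τ i) := by
  have : (N : ℝ) ≠ 0 := by positivity
  unfold overlap
  rw [← mul_assoc, mul_inv_cancel₀ this, one_mul]

lemma overlap_self (N : ℕ) (hN : 1 ≤ N) (σ : Fin N → Bool) : overlap N σ σ = 1 := by
  have : (N : ℝ) ≠ 0 := by positivity
  simp [overlap, spin_sq, this]

lemma vecP_sum (N : ℕ) (hN : 1 ≤ N) (β s : ℝ) (hs : 0 ≤ s) (σ τ : Fin N → Bool) :
    ((vecP N β s).map fun v => v σ * v τ).sum = β ^ 2 * s * (N * overlap N σ τ) := by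
  rw [N_overlap N hN, Finset.mul_sum, vecP, List.map_map, ← List.ofFn_eq_map, List.sum_ofFn]
  refine Finset.sum_congr rfl fun i _ => ?_
  simp only [Function.comp]
  have := Real.mul_self_sqrt hs
  linear_combination (β ^ 2 * spin (σ i) * spin (τ i)) * this

lemma OrderParam.m_nonneg (X : OrderParam) : ∀ a, a ≤ X.K → 0 ≤ X.m a := by
  intro a
  induction a with
  | zero => intro _; rw [X.hm0]
  | succ a ih =>
    intro h
    rcases Nat.eq_zero_or_pos a with h0 | h0
    · subst h0; exact X.hm1
    · exact (ih (by omega)).trans (X.hm_mono a h0 (by omega))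

lemma OrderParam.m_step (X : OrderParam) (a : ℕ) (ha : a ≤ X.K) : X.m a ≤ X.m (a + 1) := by
  rcases Nat.eq_zero_or_pos a with h0 | h0
  · subst h0; rw [X.hm0]; exact X.hm1
  · rcases Nat.lt_or_ge a X.K with h | h
    · exact X.hm_mono a h0 h
    · have : a = X.K := le_antisymm ha h
      rw [this, X.hmtop]; exact X.hmK

lemma lev_ginv (N : ℕ) (hN : 1 ≤ N) (X : OrderParam) (β : ℝ) : ∀ j, j ≤ X.K →
    GInv (uLev N X.K X.q X.m β j) (Dq N β (X.q (X.K - j))) (X.m (X.K - j + 1))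
      (-(β ^ 2 * N / 2 * ∑ i ∈ Finset.range j,
        X.m (X.K - i) * (X.q (X.K - i) ^ 2 - X.q (X.K - i - 1) ^ 2))) := by
  intro j
  induction j with
  | zero =>
    intro _
    have := base_ginv (D := Dq N β (X.q X.K)) (fun σ => by
      simp [Dq, overlap_self N hN, X.hqK])
    simpa [X.hmtop, uLev] using this
  | succ j ih =>
    intro hj
    obtain ⟨a, ha⟩ : ∃ a, X.K - j = a + 1 := ⟨X.K - j - 1, by omega⟩
    have ih' := ih (by omega)
    have ha' : X.K - (j + 1) = a := by omega
    rw [Finset.sum_range_succ, ha', uLev]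
    rw [ha] at ih' ⊢
    simp only [Nat.add_sub_cancel]
    have hs : 0 ≤ X.q (a + 1) - X.q a := sub_nonneg.2 (X.hq_mono a (by omega))
    have h1 := ((ih'.lower (m' := X.m (a + 1)) (fun σ τ => by unfold Dq; positivity)
      (X.m_step (a + 1) (by omega))).fold_cos (X.m_nonneg _ (by omega))
        (vecP N β (X.q (a + 1) - X.q a))).shift (D' := Dq N β (X.q a))
          (k := β ^ 2 * N / 2 * (X.q (a + 1) ^ 2 - X.q a ^ 2)) (fun σ τ => by
            rw [vecP_sum N hN β _ hs]
            unfold Dq; ring)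
    convert h1 using 1
    ring

/-- The directions of the SK couplings. -/
def vecSK (N : ℕ) (β : ℝ) (i j : Fin N) (σ : Fin N → Bool) : ℝ :=
  if i < j then β / Real.sqrt N * (spin (σ i) * spin (σ j)) else 0

/-- All SK directions. -/
def listSK (N : ℕ) (β : ℝ) : List ((Fin N → Bool) → ℝ) :=
  (List.ofFn fun i : Fin N => List.ofFn fun j : Fin N => vecSK N β i j).flatten

lemma sum_lt_sq {N : ℕ} (a : Fin N → ℝ) :
    2 * ∑ i, ∑ j, (if i < j then a i * a j else 0) = (∑ i, a i) ^ 2 - ∑ i, a i ^ 2 := by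
  have h1 : ∑ i, ∑ j, (if i < j then a i * a j else 0) =
      ∑ i, ∑ j, (if j < i then a i * a j else 0) := by
    rw [Finset.sum_comm]
    refine Finset.sum_congr rfl fun i _ => Finset.sum_congr rfl fun j _ => ?_
    split_ifs <;> ring
  have h2 : ∑ i, a i ^ 2 = ∑ i, ∑ j, (if i = j then a i * a j else 0) := by
    simp [sq]
  rw [two_mul]
  nth_rewrite 2 [h1]
  rw [h2, sq, Finset.sum_mul_sum, ← Finset.sum_add_distrib, ← Finset.sum_sub_distrib]
  refine Finset.sum_congr rfl fun i _ => ?_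
  rw [← Finset.sum_add_distrib, ← Finset.sum_sub_distrib]
  refine Finset.sum_congr rfl fun j _ => ?_
  rcases lt_trichotomy i j with h | h | h
  · simp [h, h.ne, h.not_gt]
  · simp [h]
  · simp [h, h.ne', h.not_gt]

lemma listSK_sum (N : ℕ) (hN : 1 ≤ N) (β : ℝ) (σ τ : Fin N → Bool) :
    ((listSK N β).map fun v => v σ * v τ).sum =
      β ^ 2 * N / 2 * overlap N σ τ ^ 2 - β ^ 2 / 2 := by
  have hN0 : (N : ℝ) ≠ 0 := by positivity
  have e1 : ((listSK N β).map fun v => v σ * v τ).sum =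
      ∑ i, ∑ j, vecSK N β i j σ * vecSK N β i j τ := by
    rw [listSK, List.map_flatten, List.sum_flatten, List.map_map, List.map_ofFn, List.sum_ofFn]
    refine Finset.sum_congr rfl fun i _ => ?_
    simp [List.map_ofFn, List.sum_ofFn, Function.comp]
  have e2 : ∀ i j, vecSK N β i j σ * vecSK N β i j τ = β ^ 2 / N *
      (if i < j then (spin (σ i) * spin (τ i)) * (spin (σ j) * spin (τ j)) else 0) := by
    intro i j
    unfold vecSK
    split_ifs
    · have : Real.sqrt N * Real.sqrt N = N := Real.mul_self_sqrt (by positivity)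
      have e : β / Real.sqrt N * (β / Real.sqrt N) = β ^ 2 / N := by
        rw [div_mul_div_comm, this, sq]
      linear_combination (spin (σ i) * spin (τ i) * (spin (σ j) * spin (τ j))) * e
    · ring
  have e3 := sum_lt_sq (fun i => spin (σ i) * spin (τ i))
  have e4 : ∑ i, (spin (σ i) * spin (τ i)) ^ 2 = N := by
    have : ∀ i, (spin (σ i) * spin (τ i)) ^ 2 = 1 := fun i => by
      rw [show (spin (σ i) * spin (τ i)) ^ 2 =
        (spin (σ i) * spin (σ i)) * (spin (τ i) * spin (τ i)) by ring, spin_sq, spin_sq, mul_one]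
    simp [this]
  rw [e4, ← N_overlap N hN] at e3
  rw [e1]
  simp only [e2, ← Finset.mul_sum]
  have e5 : ∑ i, ∑ j, (if i < j then (spin (σ i) * spin (τ i)) * (spin (σ j) * spin (τ j)) else 0)
      = ((N * overlap N σ τ) ^ 2 - N) / 2 := by linarith
  rw [e5]
  field_simp

/-- The full interpolating functional. -/
def uFull (N : ℕ) (X : OrderParam) (β : ℝ) : ℝ → ((Fin N → Bool) → ℝ) → ℝ :=
  foldU 0 Real.sin (listSK N β) (uLev N X.K X.q X.m β X.K)

/-- The total correction. -/
def Ltot (X : OrderParam) : ℝ :=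
  ∑ i ∈ Finset.range X.K, X.m (X.K - i) * (X.q (X.K - i) ^ 2 - X.q (X.K - i - 1) ^ 2)

lemma full_ginv (N : ℕ) (hN : 1 ≤ N) (X : OrderParam) (β : ℝ) :
    GInv (uFull N X β) (fun _ _ => 0) 0 (-(β ^ 2 * N / 2 * Ltot X)) := by
  have h := lev_ginv N hN X β X.K le_rfl
  rw [Nat.sub_self, zero_add] at h
  have h1 := ((h.lower (m' := 0) (fun σ τ => by unfold Dq; positivity) X.hm1).fold_sin le_rfl
    (listSK N β)).shift (D' := fun _ _ => 0) (k := β ^ 2 / 2) (fun σ τ => by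
      rw [listSK_sum N hN, Dq, X.hq0]; ring)
  rw [mul_zero, sub_zero] at h1
  exact h1

lemma full_bound (N : ℕ) (hN : 1 ≤ N) (X : OrderParam) (β : ℝ) (x : (Fin N → Bool) → ℝ) :
    uFull N X β (Real.pi / 2) x ≤ uFull N X β 0 x - β ^ 2 * N / 4 * Ltot X := by
  obtain ⟨p, H, d, hr, hi⟩ := full_ginv N hN X β
  have hd : ∀ t, HasDerivAt (fun t => uFull N X β t x) (d t x) t := fun t => by
    have := hr.curve (fun _ => x) (fun _ => 0) (fun t => hasDerivAt_const t x) continuous_const t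
    simpa using this
  set L := -(β ^ 2 * N / 2 * Ltot X) with hL
  have hd2 : ∀ t, HasDerivAt (fun t => uFull N X β t x - L / 2 * Real.sin t ^ 2)
      (d t x - Real.sin t * Real.cos t * L) t := fun t =>
    ((hd t).sub (((Real.hasDerivAt_sin t).pow 2).const_mul (L / 2))).congr_deriv (by
      simp; ring)
  have hpi := Real.pi_pos
  have hanti := antitoneOn_of_deriv_nonpos (convex_Icc 0 (Real.pi / 2))
    (fun t _ => (hd2 t).continuousAt.continuousWithinAt)
    (fun t _ => (hd2 t).differentiableAt.differentiableWithinAt) (fun t ht => by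
      rw [(hd2 t).deriv]
      have := hi t (interior_subset ht) x
      simp only [zero_mul, Finset.sum_const_zero, mul_zero, add_zero] at this
      linarith)
  have := hanti (Set.left_mem_Icc.2 (by positivity)) (Set.right_mem_Icc.2 (by positivity))
    (by positivity)
  simp at this
  rw [hL] at this
  linarith
end


section
/-! ## Identification of the endpoints -/

section fold
variable {S : Type*} [Fintype S]

lemma Adm.tst {m a : ℝ} {v : S → ℝ} {g : (S → ℝ) → ℝ} (hg : Adm g) (hm : 0 ≤ m) (ha : |a| ≤ 1) :
    Adm (Tst m a v g) := by
  refine ⟨cont_Tst hm hg, ?_⟩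
  obtain ⟨hc, C, hC⟩ := hg
  exact ⟨_, fun x => Tst_growth hm ha hc hC x⟩

lemma foldU_eq (m : ℝ) (c : ℝ → ℝ) (l : List (S → ℝ)) (u : ℝ → (S → ℝ) → ℝ) (t : ℝ) :
    foldU m c l u t = l.foldr (fun v g => Tst m (c t) v g) (u t) := by
  induction l with
  | nil => rfl
  | cons v l ih =>
    rw [List.foldr_cons, ← ih]
    rfl

lemma Adm.foldr {m a : ℝ} {g : (S → ℝ) → ℝ} (hg : Adm g) (hm : 0 ≤ m) (ha : |a| ≤ 1)
    (l : List (S → ℝ)) : Adm (l.foldr (fun v g => Tst m a v g) g) := by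
  induction l with
  | nil => exact hg
  | cons v l ih => exact ih.tst hm ha

lemma Tst_zero (m : ℝ) (v : S → ℝ) (g : (S → ℝ) → ℝ) : Tst m 0 v g = g := by
  ext x
  unfold Tst
  split_ifs with h
  · simp
  · simp [h]

lemma foldr_zero (m : ℝ) (l : List (S → ℝ)) (g : (S → ℝ) → ℝ) :
    l.foldr (fun v g => Tst m 0 v g) g = g := by
  induction l with
  | nil => rfl
  | cons v l ih => rw [List.foldr_cons, ih, Tst_zero]

lemma Adm.meas {f : (S → ℝ) → ℝ} (hf : Adm f) : Measurable f := hf.1.measurable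

/-- Nested averages are averages over the product measure. -/
lemma nested_eq {X : Type*} [MeasurableSpace X] (μ : Measure X) [IsProbabilityMeasure μ]
    {f : (S → ℝ) → ℝ} (hf : Adm f) : ∀ (n : ℕ) (A : Fin n → X → S → ℝ)
    (_ : ∀ i, Measurable (A i)) (_ : ∀ i, Integrable (fun g => ‖A i g‖) μ)
    (op : Fin n → ((S → ℝ) → ℝ) → (S → ℝ) → ℝ)
    (_ : ∀ i g, Adm g → Adm (op i g) ∧ ∀ x, op i g x = ∫ G, g (x + A i G) ∂μ),
    Adm ((List.ofFn op).foldr (fun o g => o g) f) ∧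
      ∀ x, (List.ofFn op).foldr (fun o g => o g) f x =
        ∫ G, f (x + ∑ i, A i (G i)) ∂Measure.pi (fun _ : Fin n => μ) := by
  intro n
  induction n with
  | zero =>
    intro A _ _ op _
    simpa using hf
  | succ n ih =>
    intro A hA hAi op hop
    obtain ⟨h1, h2⟩ := ih (fun i => A i.succ) (fun i => hA _) (fun i => hAi _)
      (fun i => op i.succ) (fun i => hop _)
    rw [List.ofFn_succ, List.foldr_cons]
    refine ⟨(hop 0 _ h1).1, fun x => ?_⟩
    rw [(hop 0 _ h1).2]
    simp only [h2]
    have mp := (measurePreserving_piFinSuccAbove (fun _ : Fin (n + 1) => μ) 0).symm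
    have hFm : Measurable (fun G : Fin (n + 1) → X => f (x + ∑ i, A i (G i))) :=
      hf.meas.comp (measurable_const.add (Finset.measurable_sum _ fun i _ =>
        (hA i).comp (measurable_pi_apply i)))
    have hFi : Integrable (fun G : Fin (n + 1) → X => f (x + ∑ i, A i (G i)))
        (Measure.pi fun _ => μ) := by
      obtain ⟨_, C, hC⟩ := hf
      have hi : Integrable (fun G : Fin (n + 1) → X => C + ‖x‖ + ∑ i, ‖A i (G i)‖)
          (Measure.pi fun _ => μ) := by
        refine (integrable_const _).add (integrable_finsetSum _ fun i _ => ?_)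
        exact (measurePreserving_eval (fun _ : Fin (n + 1) => μ) i).integrable_comp_of_integrable
          (hAi i)
      refine hi.mono' hFm.aestronglyMeasurable (ae_of_all _ fun G => ?_)
      have h3 := norm_add_le x (∑ i, A i (G i))
      have h4 := norm_sum_le Finset.univ (fun i => A i (G i))
      have h5 := hC (x + ∑ i, A i (G i))
      rw [Real.norm_eq_abs]
      linarith
    rw [← mp.integral_comp' , integral_prod]
    · congr 1; ext z
      congr 1; ext G
      rw [Fin.sum_univ_succ]
      simp [MeasurableEquiv.piFinSuccAbove, Fin.insertNthEquiv, add_assoc]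
    · exact (mp.integrable_comp_emb (MeasurableEquiv.measurableEmbedding _)).2 hFi
end fold

/-! ### The endpoint of the SK model -/

lemma vecSK_row (N : ℕ) (β : ℝ) (i : Fin N) {g : ((Fin N → Bool) → ℝ) → ℝ} (hg : Adm g) :
    Adm ((List.ofFn (vecSK N β i)).foldr (fun v g => Tst 0 1 v g) g) ∧
      ∀ x, (List.ofFn (vecSK N β i)).foldr (fun v g => Tst 0 1 v g) g x =
        ∫ G, g (x + ∑ j, (G j * 1) • vecSK N β i j) ∂gaussN N := by
  have h := nested_eq stdGauss hg N (fun j z => (z * 1) • vecSK N β i j)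
    (fun j => by fun_prop) (fun j => by
      have : Integrable (fun z : ℝ => |z|) stdGauss :=
        (ExpBd.integrable ⟨continuous_abs, 1, 1, fun z => by
          simpa using abs_le_exp_abs z⟩)
      simp only [norm_smul, mul_one, Real.norm_eq_abs]
      exact this.mul_const _)
    (fun j g => Tst 0 1 (vecSK N β i j) g)
    (fun j g hg => ⟨hg.tst le_rfl (by simp), fun x => by simp [Tst]⟩)
  have e : List.ofFn (fun j g => Tst 0 1 (vecSK N β i j) g) =
      (List.ofFn (vecSK N β i)).map (fun v g => Tst 0 1 v g) := by
    rw [List.map_ofFn]; rfl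
  rw [e, List.foldr_map] at h
  exact h

lemma sk_end (N : ℕ) (β : ℝ) {g : ((Fin N → Bool) → ℝ) → ℝ} (hg : Adm g) (x : (Fin N → Bool) → ℝ) :
    (listSK N β).foldr (fun v g => Tst 0 1 v g) g x =
      ∫ G, g (x + ∑ i, ∑ j, (G i j * 1) • vecSK N β i j) ∂gaussC N := by
  have h := nested_eq (gaussN N) hg N (fun i G => ∑ j, (G j * 1) • vecSK N β i j)
    (fun j => by fun_prop) (fun i => by
      have h1 : Integrable (fun z : ℝ => |z|) stdGauss :=
        (ExpBd.integrable ⟨continuous_abs, 1, 1, fun z => by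
          simpa using abs_le_exp_abs z⟩)
      have h2 : Integrable (fun G : Fin N → ℝ => ∑ j, |G j| * ‖vecSK N β i j‖) (gaussN N) := by
        refine integrable_finsetSum _ fun j _ => Integrable.mul_const ?_ _
        exact (measurePreserving_eval (fun _ : Fin N => stdGauss) j).integrable_comp_of_integrable h1
      refine h2.mono' (Measurable.aestronglyMeasurable (by fun_prop)) (ae_of_all _ fun G => ?_)
      rw [norm_norm]
      refine (norm_sum_le _ _).trans (le_of_eq ?_)
      simp [norm_smul])
    (fun i g => (List.ofFn (vecSK N β i)).foldr (fun v g => Tst 0 1 v g) g)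
    (fun i g hg => vecSK_row N β i hg)
  have e : List.ofFn (fun (i : Fin N) (g : ((Fin N → Bool) → ℝ) → ℝ) =>
      (List.ofFn (vecSK N β i)).foldr (fun v g => Tst 0 1 v g) g) =
      (List.ofFn fun i => List.ofFn (vecSK N β i)).map
        (fun l g => l.foldr (fun v g => Tst 0 1 v g) g) := by
    rw [List.map_ofFn]; rfl
  rw [e, List.foldr_map] at h
  rw [listSK, List.foldr_flatten]
  exact h.2 x

/-- The linear field. -/
def linF (N : ℕ) (β : ℝ) (y : Fin N → ℝ) (σ : Fin N → Bool) : ℝ := β * ∑ i, y i * spin (σ i)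

lemma LSE_adm {S : Type*} [Fintype S] [Nonempty S] : Adm (LSE (S := S)) := by
  classical
  exact base_reg.adm 0

lemma uLev_pi (N K : ℕ) (q m : ℕ → ℝ) (β : ℝ) (j : ℕ) :
    uLev N K q m β j (Real.pi / 2) = LSE := by
  induction j with
  | zero => rfl
  | succ j ih => rw [uLev, foldU_eq, Real.cos_pi_div_two, foldr_zero, ih]

lemma full_pi (N : ℕ) (X : OrderParam) (β h : ℝ) :
    uFull N X β (Real.pi / 2) (linF N β fun _ => h) = ∫ Jc, Real.log (ZSK N β h Jc) ∂gaussC N := by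
  rw [uFull, foldU_eq, Real.sin_pi_div_two, uLev_pi, sk_end N β LSE_adm]
  congr 1; ext G
  unfold LSE ZSK
  congr 1
  refine Finset.sum_congr rfl fun σ _ => ?_
  congr 1
  simp only [Pi.add_apply, Finset.sum_apply, Pi.smul_apply, smul_eq_mul, linF, hamSK, vecSK,
    mul_one]
  have e : ∑ i, ∑ j, G i j * (if i < j then β / Real.sqrt N * (spin (σ i) * spin (σ j)) else 0) =
      β / Real.sqrt N * ∑ i, ∑ j, (if i < j then G i j * spin (σ i) * spin (σ j) else 0) := by
    simp only [Finset.mul_sum]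
    refine Finset.sum_congr rfl fun i _ => Finset.sum_congr rfl fun j _ => ?_
    split_ifs <;> ring
  rw [e, ← Finset.mul_sum]
  ring

/-! ### The Parisi endpoint -/

lemma LSE_lin (N : ℕ) (β : ℝ) (y : Fin N → ℝ) :
    LSE (linF N β y) = N * Real.log 2 + ∑ i, Real.log (Real.cosh (β * y i)) := by
  have e : ∑ σ, Real.exp (linF N β y σ) = ∏ i, (2 * Real.cosh (β * y i)) := by
    have h1 : ∀ i, 2 * Real.cosh (β * y i) = ∑ b : Bool, Real.exp (β * (y i * spin b)) := by
      intro i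
      rw [Fintype.sum_bool, Real.cosh_eq]
      simp [spin]
      ring
    simp only [h1]
    rw [Finset.prod_univ_sum, Fintype.piFinset_univ]
    refine Finset.sum_congr rfl fun σ _ => ?_
    rw [linF, Finset.mul_sum, Real.exp_sum]
  unfold LSE
  rw [e, Real.log_prod (fun i _ => by have := Real.cosh_pos (β * y i); positivity)]
  have : ∀ i, Real.log (2 * Real.cosh (β * y i)) = Real.log 2 + Real.log (Real.cosh (β * y i)) :=
    fun i => Real.log_mul two_ne_zero (Real.cosh_pos _).ne'
  simp [this, Finset.sum_add_distrib]

lemma lin_update (N : ℕ) (β s : ℝ) (y : Fin N → ℝ) (i : Fin N) (z : ℝ) :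
    linF N β y + (z * 1) • (fun σ : Fin N → Bool => β * Real.sqrt s * spin (σ i)) =
      linF N β (Function.update y i (y i + z * Real.sqrt s)) := by
  ext σ
  simp only [Pi.add_apply, Pi.smul_apply, smul_eq_mul, linF]
  have : ∑ k, Function.update y i (y i + z * Real.sqrt s) k * spin (σ k) =
      ∑ k, (y k * spin (σ k) + if k = i then z * Real.sqrt s * spin (σ i) else 0) := by
    refine Finset.sum_congr rfl fun k _ => ?_
    by_cases hk : k = i
    · subst hk; simp; ring
    · simp [hk]
  rw [this, Finset.sum_add_distrib, Finset.sum_ite_eq']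
  simp only [Finset.mem_univ, if_true]
  ring

lemma Tst_sep (N : ℕ) (β s m C : ℝ) (hm : 0 ≤ m) {g : ((Fin N → Bool) → ℝ) → ℝ} (hg : Adm g)
    (F : Fin N → ℝ → ℝ) (hF : ∀ y, g (linF N β y) = C + ∑ i, F i (y i)) (i : Fin N)
    (y : Fin N → ℝ) :
    Tst m 1 (fun σ : Fin N → Bool => β * Real.sqrt s * spin (σ i)) g (linF N β y) =
      C + ∑ k, Function.update F i (pStep m s (F i)) k (y k) := by
  set v : (Fin N → Bool) → ℝ := fun σ => β * Real.sqrt s * spin (σ i) with hv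
  set A := C + ∑ k ∈ Finset.univ.erase i, F k (y k) with hA
  have e : ∀ z, g (linF N β y + (z * 1) • v) = A + F i (y i + z * Real.sqrt s) := by
    intro z
    rw [lin_update, hF, ← Finset.add_sum_erase _ _ (Finset.mem_univ i), hA]
    have : ∑ k ∈ Finset.univ.erase i, F k (Function.update y i (y i + z * Real.sqrt s) k) =
        ∑ k ∈ Finset.univ.erase i, F k (y k) :=
      Finset.sum_congr rfl fun k hk => by
        rw [Function.update_of_ne (Finset.ne_of_mem_erase hk)]
    rw [this]; simp; ring
  have e' : C + ∑ k, Function.update F i (pStep m s (F i)) k (y k) = A + pStep m s (F i) (y i) := by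
    rw [← Finset.add_sum_erase _ _ (Finset.mem_univ i), hA]
    have : ∑ k ∈ Finset.univ.erase i, Function.update F i (pStep m s (F i)) k (y k) =
        ∑ k ∈ Finset.univ.erase i, F k (y k) :=
      Finset.sum_congr rfl fun k hk => by
        rw [Function.update_of_ne (Finset.ne_of_mem_erase hk)]
    rw [this]; simp; ring
  rw [e']
  unfold Tst pStep
  simp only [e]
  split_ifs with h0
  · have hi : Integrable (fun z => F i (y i + z * Real.sqrt s)) stdGauss := by
      have h1 := (expBd_g (a := 1) (v := v) hg (linF N β y)).integrable
      simp only [e] at h1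
      refine (h1.sub (integrable_const A)).congr (ae_of_all _ fun z => ?_)
      simp
    rw [integral_add (integrable_const _) hi]
    simp
  · have hp := Nm_one_pos (a := 1) (v := v) hm hg (linF N β y)
    unfold Nm at hp
    simp only [e] at hp
    simp only [mul_one, mul_add, Real.exp_add, integral_const_mul] at hp
    simp only [mul_add, Real.exp_add, integral_const_mul]
    rw [Real.log_mul (Real.exp_pos _).ne' (fun h => by rw [h] at hp; simp at hp), Real.log_exp,
      mul_add, ← mul_assoc, inv_mul_cancel₀ h0, one_mul]

lemma foldr_sep (N : ℕ) (β s m C : ℝ) (hm : 0 ≤ m) {g : ((Fin N → Bool) → ℝ) → ℝ} (hg : Adm g)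
    (f : ℝ → ℝ) (hF : ∀ y, g (linF N β y) = C + ∑ i, f (y i)) (l : List (Fin N)) (hl : l.Nodup)
    (y : Fin N → ℝ) :
    (l.map fun i σ => β * Real.sqrt s * spin (σ i)).foldr (fun v g => Tst m 1 v g) g (linF N β y) =
      C + ∑ i, (if i ∈ l then pStep m s f else f) (y i) := by
  induction l generalizing y with
  | nil => simpa using hF y
  | cons i l ih =>
    rw [List.nodup_cons] at hl
    rw [List.map_cons, List.foldr_cons,
      Tst_sep N β s m C hm (hg.foldr hm (by simp) _) _ (fun y => ih hl.2 y) i y]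
    congr 1
    refine Finset.sum_congr rfl fun k _ => ?_
    by_cases hk : k = i
    · subst hk; simp [hl.1]
    · simp [hk]

lemma uLev_adm (N : ℕ) (X : OrderParam) (β t : ℝ) (j : ℕ) (hj : j ≤ X.K) :
    Adm (uLev N X.K X.q X.m β j t) := by
  induction j with
  | zero => exact LSE_adm
  | succ j ih =>
    rw [uLev, foldU_eq]
    exact (ih (by omega)).foldr (X.m_nonneg _ (by omega)) (Real.abs_cos_le_one t) _

lemma uLev_zero (N : ℕ) (X : OrderParam) (β : ℝ) (j : ℕ) (hj : j ≤ X.K) (y : Fin N → ℝ) :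
    uLev N X.K X.q X.m β j 0 (linF N β y) =
      N * Real.log 2 + ∑ i, parisiLevel X.K X.q X.m β j (y i) := by
  induction j generalizing y with
  | zero => exact LSE_lin N β y
  | succ j ih =>
    rw [uLev, foldU_eq, Real.cos_zero, vecP, foldr_sep N β _ _ _ (X.m_nonneg _ (by omega))
      (uLev_adm N X β 0 j (by omega)) (parisiLevel X.K X.q X.m β j) (fun y => ih (by omega) y)
      _ (List.nodup_finRange N)]
    simp [parisiLevel]

lemma full_zero (N : ℕ) (X : OrderParam) (β h : ℝ) :
    uFull N X β 0 (linF N β fun _ => h) =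
      N * (Real.log 2 + parisiLevel X.K X.q X.m β X.K h) := by
  rw [uFull, foldU_eq, Real.sin_zero, foldr_zero, uLev_zero N X β X.K le_rfl]
  simp; ring
end


section
/-! ## The order parameter integral and conclusion -/

lemma OrderParam.q_mono (X : OrderParam) {b a : ℕ} (hba : b ≤ a) (ha : a ≤ X.K) :
    X.q b ≤ X.q a := by
  induction a with
  | zero => rw [Nat.le_zero.1 hba]
  | succ a ih =>
    rcases Nat.eq_or_lt_of_le hba with h | h
    · rw [h]
    · exact (ih (by omega) (by omega)).trans (X.hq_mono a (by omega))

lemma xFun_eq (X : OrderParam) {a : ℕ} (ha : a < X.K) {r : ℝ}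
    (hr : r ∈ Set.Ioo (X.q a) (X.q (a + 1))) : xFun X.K X.q X.m r = X.m (a + 1) := by
  have h1 : X.q (a + 1) ≤ 1 := by
    rw [← X.hqK]; exact X.q_mono (by omega) le_rfl
  have h2 : ¬ (1 ≤ r) := by have := hr.2; linarith
  have h3 : sInf {b : ℕ | r < X.q b} = a + 1 := by
    apply le_antisymm
    · exact Nat.sInf_le hr.2
    · refine le_csInf ⟨a + 1, hr.2⟩ fun b hb => ?_
      by_contra hlt
      have h4 : X.q b ≤ X.q a := X.q_mono (by omega) (by omega)
      have h5 : r < X.q b := hb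
      have := hr.1
      linarith
  rw [xFun, if_neg h2, h3]

lemma xFun_integral (X : OrderParam) :
    ∫ r in (0 : ℝ)..1, r * xFun X.K X.q X.m r = Ltot X / 2 := by
  have hcg : ∀ a, a < X.K → Set.EqOn (fun r => r * X.m (a + 1)) (fun r => r * xFun X.K X.q X.m r)
      (Set.Ioo (X.q a) (X.q (a + 1))) := fun a ha r hr => by
    simp only [xFun_eq X ha hr]
  have h := intervalIntegral.sum_integral_adjacent_intervals (μ := volume)
    (f := fun r => r * xFun X.K X.q X.m r) (a := X.q) (n := X.K) (fun a ha => by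
      refine IntervalIntegrable.congr_uIoo (f := fun r => r * X.m (a + 1))
        (Continuous.intervalIntegrable (by fun_prop) _ _) ?_
      rw [Set.uIoo_of_le (X.hq_mono a ha)]
      exact hcg a ha)
  rw [X.hq0, X.hqK] at h
  rw [Ltot, ← Finset.sum_range_reflect, ← h, Finset.sum_div]
  refine Finset.sum_congr rfl fun a ha => ?_
  have ha' := Finset.mem_range.1 ha
  rw [← intervalIntegral.integral_congr_Ioo_of_le (X.hq_mono a ha') (hcg a ha'),
    intervalIntegral.integral_mul_const, integral_id]
  have e1 : X.K - (X.K - 1 - a) = a + 1 := by omega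
  rw [e1, Nat.add_sub_cancel]
  ring

lemma guerra_bound_one (N : ℕ) (hN : 1 ≤ N) (β h : ℝ) (X : OrderParam) :
    quenchedFE N β h ≤ trialAlpha X.K X.q X.m β h := by
  have hN0 : 0 < (N : ℝ) := by positivity
  have h1 := full_bound N hN X β (linF N β fun _ => h)
  rw [full_pi, full_zero] at h1
  unfold quenchedFE trialAlpha
  rw [xFun_integral, inv_mul_le_iff₀ hN0]
  refine h1.trans (le_of_eq ?_)
  ring

instance : Nonempty OrderParam :=
  ⟨{ K := 1
     hK := le_rfl
     q := fun n => if n = 0 then 0 else 1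
     m := fun n => if n = 0 then 0 else 1
     hq0 := by simp
     hqK := by simp
     hq_mono := fun a _ => by by_cases h : a = 0 <;> simp [h]
     hm0 := by simp
     hmtop := by simp
     hm1 := by simp
     hm_mono := fun a _ _ => by by_cases h : a = 0 <;> simp [h]
     hmK := by simp }⟩
end

/-- for every `N ≥ 1`, `β ≥ 0` and `h ∈ ℝ`, the quenched free energy
of the SK model is bounded by the Parisi solution
`ᾱ(β, h) = inf_x ᾱ(β, h; x)`, the infimum running over all piecewise constant
functional order parameters: `N⁻¹ E log Z_N(β, h, J) ≤ ᾱ(β, h)`. -/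
theorem guerra_bound_inf (N : ℕ) (hN : 1 ≤ N) (β h : ℝ) (hβ : 0 ≤ β) :
    quenchedFE N β h ≤ ⨅ X : OrderParam, trialAlpha X.K X.q X.m β h := by
  exact le_ciInf fun X => guerra_bound_one N hN β h X

end
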